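/- arXiv:math/0409161 — 4 statements merged into one kernel-verified Lean document; each statement's English description precedes it below -/
import Mathlib

section
/- Let Λ be a left and right Noetherian ring which is ∞-Gorenstein. Then the small finitistic dimension fin.dim Λ, the big finitistic dimension Fin.dim Λ, and the left self-injective dimension id_Λ Λ all coincide. -/
/-!
For a natural number `n`, the three bounds `fin.dim Λ ≤ n`, `Fin.dim Λ ≤ n` and `id_Λ Λ ≤ n` are
shown to imply each other cyclically; `Fin.dim Λ ≤ n` trivially gives `fin.dim Λ ≤ n`.

If `id_Λ Λ ≤ n`, then direct sums of copies of `Λ` have injective dimension at most `n` because `Λ`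
is left Noetherian (`hasInjectiveDimensionLE_finsupp`). If `pd M ≤ m + 1` with `m ≥ n`, then
`Ext^{m+1}(M, -)` is right exact and vanishes on free modules, hence vanishes, and so `pd M ≤ m`.
Iterating gives `pd M ≤ n` (`hasProjectiveDimensionLE_of_idLE`).

If `fin.dim Λ ≤ n`, it suffices by Baer's criterion (`hasInjectiveDimensionLE_of_finite`) that
`E = Ext^{n+1}(M, Λ)` vanishes for finitely generated `M`. The Gorenstein condition, applied to `E`
itself, gives `Ext^j(E, Λ) = 0` for `j ≤ n`. Dualizing a resolution `P•` of `E` by finitely generated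
projective right modules therefore yields an exact sequence `0 → P₀* → ⋯ → P_{n+1}*`. Its last
cokernel has projective dimension at most `n + 1`, hence at most `n`, and so the cokernel of
`P₀* → P₁*` is projective: this map splits (`exists_retraction`). Since finitely generated
projective modules are reflexive, `P₁ → P₀` is then onto (`surjective_of_retraction`), and its
cokernel `E` is zero (`subsingleton_of_ext`).

The groups `extGrp`, defined as derived functors, are compared with `Abelian.Ext`, so that long
exact sequences and Mathlib's projective and injective dimensions are available.
-/

open CategoryTheory

noncomputable section

/-- The `n`-th Ext group of `M` and `N` over `Λ`, as an object of `ModuleCat ℤ`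
(computed in the abelian category of `Λ`-modules). -/
def extGrp (Λ : Type) [Ring Λ] (n : ℕ) (M N : ModuleCat Λ) : ModuleCat ℤ :=
  ((_root_.Ext ℤ (ModuleCat Λ) n).obj (Opposite.op M)).obj N

section Dual

variable (Λ : Type) [Ring Λ]

/-- The canonical evaluation map from a left module to its double dual. -/
def evalL (M : Type) [AddCommGroup M] [Module Λ M] :
    M →ₗ[Λ] ((M →ₗ[Λ] Λ) →ₗ[Λᵐᵒᵖ] Λ) where
  toFun m := { toFun := fun f => f m, map_add' := fun _ _ => rfl, map_smul' := fun _ _ => rfl }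
  map_add' m m' := by ext f; simp
  map_smul' a m := by ext f; simp

/-- The canonical evaluation map from a right module to its double dual. -/
def evalR (N : Type) [AddCommGroup N] [Module Λᵐᵒᵖ N] :
    N →ₗ[Λᵐᵒᵖ] ((N →ₗ[Λᵐᵒᵖ] Λ) →ₗ[Λ] Λ) where
  toFun n := { toFun := fun f => f n, map_add' := fun _ _ => rfl, map_smul' := fun _ _ => rfl }
  map_add' n n' := by ext f; simp
  map_smul' a n := by ext f; simp

variable {Λ}

/-- Dualizing a map of left modules (precomposition on `Hom(-,Λ)`). -/
def dualMap {P Q : Type} [AddCommGroup P] [Module Λ P] [AddCommGroup Q] [Module Λ Q]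
    (g : P →ₗ[Λ] Q) : (Q →ₗ[Λ] Λ) →ₗ[Λᵐᵒᵖ] (P →ₗ[Λ] Λ) where
  toFun f := f.comp g
  map_add' _ _ := rfl
  map_smul' _ _ := rfl

/-- Dualizing a map of right modules (precomposition on `Hom(-,Λ)`). -/
def dualMapR {P Q : Type} [AddCommGroup P] [Module Λᵐᵒᵖ P] [AddCommGroup Q] [Module Λᵐᵒᵖ Q]
    (g : P →ₗ[Λᵐᵒᵖ] Q) : (Q →ₗ[Λᵐᵒᵖ] Λ) →ₗ[Λ] (P →ₗ[Λᵐᵒᵖ] Λ) where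
  toFun f := f.comp g
  map_add' _ _ := rfl
  map_smul' _ _ := rfl

end Dual

/-- A projective presentation `P₁ → P₀ → M → 0` by finitely generated projectives. -/
structure Presentation (Λ : Type) [Ring Λ] (M : Type) [AddCommGroup M] [Module Λ M] where
  P₁ : Type
  P₀ : Type
  [acg₁ : AddCommGroup P₁]
  [acg₀ : AddCommGroup P₀]
  [mod₁ : Module Λ P₁]
  [mod₀ : Module Λ P₀]
  [fin₁ : Module.Finite Λ P₁]
  [fin₀ : Module.Finite Λ P₀]
  [proj₁ : Module.Projective Λ P₁]
  [proj₀ : Module.Projective Λ P₀]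
  g : P₁ →ₗ[Λ] P₀
  π : P₀ →ₗ[Λ] M
  surj : Function.Surjective π
  exact : LinearMap.range g = LinearMap.ker π

attribute [instance] Presentation.acg₁ Presentation.acg₀ Presentation.mod₁ Presentation.mod₀
  Presentation.fin₁ Presentation.fin₀ Presentation.proj₁ Presentation.proj₀

/-- The Auslander transpose `Tr M = Coker(P₀* → P₁*)` attached to a projective
presentation; it is a right `Λ`-module. -/
abbrev Presentation.Tr {Λ : Type} [Ring Λ] {M : Type} [AddCommGroup M] [Module Λ M]
    (pr : Presentation Λ M) : Type :=
  (pr.P₁ →ₗ[Λ] Λ) ⧸ LinearMap.range (dualMap pr.g)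

/-- A resolution of a left module by finitely generated projective modules. -/
structure FGProjRes (Λ : Type) [Ring Λ] (M : Type) [AddCommGroup M] [Module Λ M] where
  P : ℕ → Type
  [acg : ∀ n, AddCommGroup (P n)]
  [mod : ∀ n, Module Λ (P n)]
  [fin : ∀ n, Module.Finite Λ (P n)]
  [proj : ∀ n, Module.Projective Λ (P n)]
  d : ∀ n, P (n + 1) →ₗ[Λ] P n
  π : P 0 →ₗ[Λ] M
  surj : Function.Surjective π
  exact0 : LinearMap.range (d 0) = LinearMap.ker π
  exact : ∀ n, LinearMap.range (d (n + 1)) = LinearMap.ker (d n)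

attribute [instance] FGProjRes.acg FGProjRes.mod FGProjRes.fin FGProjRes.proj

/-- Cocycles in degree `t` of the dualized complex `Hom(P•, Λ)`. -/
abbrev FGProjRes.extSub {Λ : Type} [Ring Λ] {M : Type} [AddCommGroup M] [Module Λ M]
    (R : FGProjRes Λ M) (t : ℕ) : Submodule Λᵐᵒᵖ (R.P t →ₗ[Λ] Λ) :=
  LinearMap.ker (dualMap (R.d t))

/-- Coboundaries in degree `t` of the dualized complex `Hom(P•, Λ)`. -/
def FGProjRes.extBdry {Λ : Type} [Ring Λ] {M : Type} [AddCommGroup M] [Module Λ M]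
    (R : FGProjRes Λ M) : (t : ℕ) → Submodule Λᵐᵒᵖ (R.extSub t)
  | 0 => ⊥
  | (t + 1) => (LinearMap.range (dualMap (R.d t))).comap (R.extSub (t + 1)).subtype

/-- `Ext^t_Λ(M, Λ)` computed from the resolution `R`, as a right `Λ`-module. -/
abbrev FGProjRes.extQ {Λ : Type} [Ring Λ] {M : Type} [AddCommGroup M] [Module Λ M]
    (R : FGProjRes Λ M) (t : ℕ) : Type :=
  @HasQuotient.Quotient _ _ (@Submodule.hasQuotient Λᵐᵒᵖ (R.extSub t) _ _ _) (R.extBdry t)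

/-- A resolution of a right module by finitely generated projective modules. -/
structure FGProjResR (Λ : Type) [Ring Λ] (N : Type) [AddCommGroup N] [Module Λᵐᵒᵖ N] where
  P : ℕ → Type
  [acg : ∀ n, AddCommGroup (P n)]
  [mod : ∀ n, Module Λᵐᵒᵖ (P n)]
  [fin : ∀ n, Module.Finite Λᵐᵒᵖ (P n)]
  [proj : ∀ n, Module.Projective Λᵐᵒᵖ (P n)]
  d : ∀ n, P (n + 1) →ₗ[Λᵐᵒᵖ] P n
  π : P 0 →ₗ[Λᵐᵒᵖ] N
  surj : Function.Surjective π
  exact0 : LinearMap.range (d 0) = LinearMap.ker π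
  exact : ∀ n, LinearMap.range (d (n + 1)) = LinearMap.ker (d n)

attribute [instance] FGProjResR.acg FGProjResR.mod FGProjResR.fin FGProjResR.proj

/-- Cocycles in degree `t` of the dualized complex `Hom(P•, Λ)` (right module case). -/
abbrev FGProjResR.extSub {Λ : Type} [Ring Λ] {N : Type} [AddCommGroup N] [Module Λᵐᵒᵖ N]
    (R : FGProjResR Λ N) (t : ℕ) : Submodule Λ (R.P t →ₗ[Λᵐᵒᵖ] Λ) :=
  LinearMap.ker (dualMapR (R.d t))

/-- Coboundaries in degree `t` of the dualized complex (right module case). -/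
def FGProjResR.extBdry {Λ : Type} [Ring Λ] {N : Type} [AddCommGroup N] [Module Λᵐᵒᵖ N]
    (R : FGProjResR Λ N) : (t : ℕ) → Submodule Λ (R.extSub t)
  | 0 => ⊥
  | (t + 1) => (LinearMap.range (dualMapR (R.d t))).comap (R.extSub (t + 1)).subtype

/-- `Ext^t_{Λᵒᵖ}(N, Λ)` computed from the resolution `R`, as a left `Λ`-module. -/
abbrev FGProjResR.extQ {Λ : Type} [Ring Λ] {N : Type} [AddCommGroup N] [Module Λᵐᵒᵖ N]
    (R : FGProjResR Λ N) (t : ℕ) : Type :=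
  @HasQuotient.Quotient _ _ (@Submodule.hasQuotient Λ (R.extSub t) _ _ _) (R.extBdry t)

/-- `pd_Λ M ≤ n`, via the standard characterization `Ext^{n+1}(M, -) = 0`. -/
def pdLE (Λ : Type) [Ring Λ] (M : ModuleCat Λ) (n : ℕ) : Prop :=
  ∀ N : ModuleCat Λ, Subsingleton (extGrp Λ (n + 1) M N)

/-- `id_Λ Λ ≤ n` (left self-injective dimension), via `Ext^{n+1}(-, Λ) = 0`. -/
def idLambdaLE (Λ : Type) [Ring Λ] (n : ℕ) : Prop :=
  ∀ N : ModuleCat Λ, Subsingleton (extGrp Λ (n + 1) N (ModuleCat.of Λ Λ))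

/-- `id_{Λᵒᵖ} Λ ≤ n` (right self-injective dimension). -/
def idLambdaOpLE (Λ : Type) [Ring Λ] (n : ℕ) : Prop :=
  ∀ N : ModuleCat Λᵐᵒᵖ, Subsingleton (extGrp Λᵐᵒᵖ (n + 1) N (ModuleCat.of Λᵐᵒᵖ Λ))

/-- `Λ` is `m`-Gorenstein, via Auslander's characterization:
`s.grade Ext^i_Λ(M, Λ) ≥ i` for every finitely generated left `Λ`-module `M`
and all `1 ≤ i ≤ m` ([FGR, Theorem 3.7]). -/
def IsGorensteinLE (Λ : Type) [Ring Λ] (m : ℕ) : Prop :=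
  ∀ (M : Type) [AddCommGroup M] [Module Λ M] [Module.Finite Λ M] (R : FGProjRes Λ M)
    (i : ℕ), 1 ≤ i → i ≤ m → ∀ X : Submodule Λᵐᵒᵖ (R.extQ i), ∀ j < i,
      Subsingleton (extGrp Λᵐᵒᵖ j (ModuleCat.of Λᵐᵒᵖ X) (ModuleCat.of Λᵐᵒᵖ Λ))

/-- `Λ` is left quasi `∞`-Gorenstein: `grade Ext^i_Λ(M, Λ) ≥ i` for every finitely
generated left `Λ`-module `M` and all `i ≥ 1`. -/
def LeftQuasiInfGorenstein (Λ : Type) [Ring Λ] : Prop :=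
  ∀ (M : Type) [AddCommGroup M] [Module Λ M] [Module.Finite Λ M] (R : FGProjRes Λ M)
    (i : ℕ), 1 ≤ i → ∀ j < i,
      Subsingleton (extGrp Λᵐᵒᵖ j (ModuleCat.of Λᵐᵒᵖ (R.extQ i)) (ModuleCat.of Λᵐᵒᵖ Λ))

/-- `M` is pseudo-null, i.e. `s.grade M ≥ 2`: every submodule of `M` has grade at
least `2` (equivalently `Hom_Λ(M, I'₀ ⊕ I'₁) = 0`, by [CSS, Lemma 1.1]). -/
def IsPseudoNull (Λ : Type) [Ring Λ] (M : Type) [AddCommGroup M] [Module Λ M] : Prop :=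
  ∀ X : Submodule Λ M, ∀ j < 2,
    Subsingleton (extGrp Λ j (ModuleCat.of Λ X) (ModuleCat.of Λ Λ))

/-- `M` is `k`-torsionfree: `Ext^j_{Λᵒᵖ}(Tr M, Λ) = 0` for all `1 ≤ j ≤ k`. -/
def KTorsionfree (Λ : Type) [Ring Λ] (k : ℕ) (M : Type) [AddCommGroup M] [Module Λ M] : Prop :=
  ∀ pr : Presentation Λ M, ∀ j, 1 ≤ j → j ≤ k →
    Subsingleton (extGrp Λᵐᵒᵖ j (ModuleCat.of Λᵐᵒᵖ pr.Tr) (ModuleCat.of Λᵐᵒᵖ Λ))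

end

/-! ### Comparison with `Abelian.Ext` and homological dimensions -/

theorem subsingleton_extGrp_zero_iff {Λ : Type} [Ring Λ] (X Y : ModuleCat Λ) :
    Subsingleton (extGrp Λ 0 X Y) ↔ Subsingleton (Abelian.Ext X Y 0) := by
  let P := projectiveResolution X
  have e : extGrp Λ 0 X Y ≅ _ := P.isoExt (R := ℤ) 0 Y
  rw [e.toLinearEquiv.toEquiv.subsingleton_congr,
    ← ModuleCat.isZero_iff_subsingleton,
    ← HomologicalComplex.exactAt_iff_isZero_homology,
    HomologicalComplex.exactAt_iff' _ 0 0 1 (by simp) (by simp),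
    ShortComplex.moduleCat_exact_iff, Abelian.Ext.homEquiv₀.subsingleton_congr]
  have hd : ∀ g, ((P.complex.linearYonedaObj ℤ Y).sc' 0 0 1).f g = 0 := fun g => by
    simp only [HomologicalComplex.shortComplexFunctor'_obj_f]
    rw [HomologicalComplex.shape _ 0 0 (by simp)]
    rfl
  have hπ : P.complex.d 1 0 ≫ P.π.f 0 = 0 := P.complex_d_comp_π_f_zero
  constructor
  · intro h
    refine subsingleton_of_forall_eq 0 fun (u : ((ChainComplex.single₀ _).obj X).X 0 ⟶ Y) => ?_
    obtain ⟨g, hg⟩ := h (P.π.f 0 ≫ u) (by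
      change P.complex.d 1 0 ≫ P.π.f 0 ≫ u = 0
      rw [reassoc_of% hπ, Limits.zero_comp])
    rw [hd] at hg
    exact (cancel_epi (P.π.f 0)).1 (by rw [← hg]; exact Limits.comp_zero.symm)
  · intro h f hf
    refine ⟨0, ?_⟩
    rw [map_zero]
    have hex : (ShortComplex.mk _ _ hπ).Exact := P.exact₀
    obtain ⟨u, hu⟩ : ∃ u, P.π.f 0 ≫ u = f := ⟨hex.desc f hf, hex.g_desc f hf⟩
    have : u = 0 := h.elim _ _
    rw [← hu, this]
    exact Limits.comp_zero.symm

theorem subsingleton_extGrp_succ_iff {Λ : Type} [Ring Λ] (n : ℕ) (X Y : ModuleCat Λ) :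
    Subsingleton (extGrp Λ (n + 1) X Y) ↔ Subsingleton (Abelian.Ext X Y (n + 1)) := by
  let P := projectiveResolution X
  have e : extGrp Λ (n + 1) X Y ≅ _ := P.isoExt (R := ℤ) (n + 1) Y
  rw [e.toLinearEquiv.toEquiv.subsingleton_congr,
    ← ModuleCat.isZero_iff_subsingleton,
    ← HomologicalComplex.exactAt_iff_isZero_homology,
    HomologicalComplex.exactAt_iff' _ n (n + 1) (n + 2) (by simp) (by simp),
    ShortComplex.moduleCat_exact_iff]
  constructor
  · intro h
    refine subsingleton_of_forall_eq 0 fun α => ?_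
    obtain ⟨f, hf, rfl⟩ := P.extMk_surjective α (n + 2) rfl
    rw [P.extMk_eq_zero_iff f (n + 2) rfl hf n rfl]
    exact h f hf
  · intro h f hf
    exact (P.extMk_eq_zero_iff (n := n + 1) f (n + 2) rfl hf n rfl).1 (Subsingleton.elim _ _)

/-- The short exact sequence `0 → X → I → I/X → 0` with `I` the injective module chosen by
`Injective.under`. -/
theorem shortExact_injectiveUnder {Λ : Type} [Ring Λ] (X : ModuleCat Λ) :
    (ShortComplex.mk (Injective.ι X) (Limits.cokernel.π (Injective.ι X))
      (Limits.cokernel.condition _)).ShortExact where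
  exact := ShortComplex.exact_cokernel _

/-- Vanishing of `Ext^{n+1}(M, -)` propagates to higher degrees by dimension shifting along injective
embeddings of the second argument. -/
theorem pdLE_iff {Λ : Type} [Ring Λ] (M : ModuleCat Λ) (n : ℕ) :
    pdLE Λ M n ↔ HasProjectiveDimensionLE M n := by
  simp only [pdLE, subsingleton_extGrp_succ_iff]
  refine ⟨fun h => ?_, fun h N => h.subsingleton _ _ _ le_rfl N⟩
  have key : ∀ i, n + 1 ≤ i → ∀ N, Subsingleton (Abelian.Ext M N i) := by
    intro i hi
    induction i, hi using Nat.le_induction with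
    | base => exact h
    | succ i hi ih =>
      intro N
      have := ih (Limits.cokernel (Injective.ι N))
      exact (postcomp_extClass_surjective_of_projective_X₂
        (shortExact_injectiveUnder N) M i).subsingleton
  exact .mk fun i hi Y e => (key i hi Y).elim _ _

/-- Vanishing of `Ext^{n+1}(-, Λ)` propagates to higher degrees by dimension shifting along
projective presentations of the first argument. -/
theorem idLambdaLE_iff {Λ : Type} [Ring Λ] (n : ℕ) :
    idLambdaLE Λ n ↔ HasInjectiveDimensionLE (ModuleCat.of Λ Λ) n := by
  simp only [idLambdaLE, subsingleton_extGrp_succ_iff]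
  refine ⟨fun h => ?_, fun h N => h.subsingleton _ _ _ le_rfl N⟩
  have key : ∀ i, n + 1 ≤ i → ∀ N, Subsingleton (Abelian.Ext N (ModuleCat.of Λ Λ) i) := by
    intro i hi
    induction i, hi using Nat.le_induction with
    | base => exact h
    | succ i hi ih =>
      intro N
      have := ih N.projectiveShortComplex.X₁
      have := ModuleCat.projective_of_free (R := Λ) (M := N.projectiveShortComplex.X₂)
        (Module.Free.chooseBasis Λ N.projectiveShortComplex.X₂)
      exact (precomp_extClass_surjective_of_projective_X₂ (ModuleCat.of Λ Λ)
        (ModuleCat.shortExact_projectiveShortComplex N) i).subsingleton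
  exact .mk fun i hi Y e => (key i hi Y).elim _ _

/-! ### Injective dimension and finitely generated modules -/

/-- Baer's criterion in higher degrees: vanishing of `Ext^{n+1}` out of finitely generated modules
bounds the injective dimension by `n`. -/
theorem hasInjectiveDimensionLE_of_finite {Λ : Type} [Ring Λ] (n : ℕ) (X : ModuleCat Λ)
    (h : ∀ M : ModuleCat Λ, Module.Finite Λ M → Subsingleton (Abelian.Ext M X (n + 1))) :
    HasInjectiveDimensionLE X n := by
  induction n generalizing X with
  | zero =>
    rw [HasInjectiveDimensionLE, ← injective_iff_hasInjectiveDimensionLT_one,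
      ← Module.injective_iff_injective_object]
    refine Module.Baer.injective fun I f => ?_
    let S := ModuleCat.shortComplexOfCompEqZero I.subtype I.mkQ (by ext; simp)
    have hS : S.ShortExact := ModuleCat.shortComplex_shortExact S
      (LinearMap.exact_subtype_mkQ I) I.injective_subtype I.mkQ_surjective
    have := h S.X₃ (inferInstanceAs (Module.Finite Λ (Λ ⧸ I)))
    obtain ⟨α, hα⟩ := Abelian.Ext.contravariant_sequence_exact₁ hS X
      (Abelian.Ext.mk₀ (ModuleCat.ofHom f : S.X₁ ⟶ X)) (n₁ := 1) rfl (this.elim _ _)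
    obtain ⟨g, rfl⟩ := Abelian.Ext.homEquiv₀.symm.surjective α
    have hg : S.f ≫ g = ModuleCat.ofHom f :=
      Abelian.Ext.homEquiv₀.symm.injective (by simpa using hα)
    refine ⟨g.hom, fun x mem => ?_⟩
    exact congr($hg ⟨x, mem⟩)
  | succ n ih =>
    have hS := shortExact_injectiveUnder X
    refine hS.hasInjectiveDimensionLT_X₁ (n + 1) (ih _ fun M hM => ?_) inferInstance
    have := h M hM
    refine subsingleton_of_forall_eq 0 fun α => ?_
    obtain ⟨β, rfl⟩ := Abelian.Ext.covariant_sequence_exact₃ M hS α (n₁ := n + 2) rfl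
      (this.elim _ _)
    rw [β.eq_zero_of_injective, Abelian.Ext.zero_comp]

/-! ### Finitistic dimension is bounded by self-injective dimension -/

/-- Direct sums of copies of an injective module over a left Noetherian ring are injective: a map out
of a finitely generated ideal lands in finitely many summands. -/
theorem injective_finsupp {Λ : Type} [Ring Λ] [IsNoetherianRing Λ] (X : Type) [AddCommGroup X]
    [Module Λ X] (hX : Module.Injective Λ X) (ι : Type) : Module.Injective Λ (ι →₀ X) := by
  classical
  refine Module.Baer.injective fun I f => ?_
  obtain ⟨s, hs⟩ : ∃ s : Finset ι, ∀ x i, i ∉ s → f x i = 0 := by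
    obtain ⟨t, ht⟩ := (Module.Finite.fg_top : (⊤ : Submodule Λ I).FG)
    refine ⟨t.biUnion fun y => (f y).support, fun x i hi => ?_⟩
    have hx : x ∈ Submodule.span Λ (t : Set I) := ht ▸ Submodule.mem_top
    induction hx using Submodule.span_induction with
    | mem y hy =>
      by_contra hne
      exact hi (Finset.mem_biUnion.2 ⟨y, hy, Finsupp.mem_support_iff.2 hne⟩)
    | zero => simp
    | add y z _ _ hy hz => simp [hy, hz]
    | smul a y _ hy => simp [hy]
  have hB := Module.Baer.of_injective hX
  choose g hg using fun i => hB I (Finsupp.lapply i ∘ₗ f)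
  refine ⟨∑ i ∈ s, Finsupp.lsingle i ∘ₗ g i, fun x mem => ?_⟩
  ext i
  simp only [LinearMap.sum_apply, LinearMap.comp_apply, Finsupp.lsingle_apply,
    Finsupp.finsetSum_apply, Finsupp.single_apply, Finset.sum_ite_eq']
  split_ifs with hi
  · exact hg i x mem
  · exact (hs _ i hi).symm

/-- Direct sums of copies of an exact sequence `0 → X → Y → Z` are exact. -/
theorem exact_mapRange {Λ ι X Y Z : Type*} [Ring Λ] [AddCommGroup X] [Module Λ X] [AddCommGroup Y]
    [Module Λ Y] [AddCommGroup Z] [Module Λ Z] (f : X →ₗ[Λ] Y) (g : Y →ₗ[Λ] Z)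
    (h : Function.Exact f g) (hf : Function.Injective f) :
    Function.Exact (Finsupp.mapRange.linearMap (α := ι) f) (Finsupp.mapRange.linearMap g) := by
  intro y
  constructor
  · intro hy
    have hy' : ∀ i, y i ∈ Set.range f := fun i => (h _).1 (by simpa using DFunLike.congr_fun hy i)
    refine ⟨y.mapRange (Function.invFun f) ?_, ?_⟩
    · exact hf ((Function.invFun_eq ⟨0, map_zero f⟩).trans (map_zero f).symm)
    · ext i
      exact Function.invFun_eq (hy' i)
  · rintro ⟨x, rfl⟩
    ext i
    simp [h.apply_apply_eq_zero]

/-- Over a left Noetherian ring, passing to a direct sum of copies of a module does not increase the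
injective dimension. -/
theorem hasInjectiveDimensionLE_finsupp {Λ : Type} [Ring Λ] [IsNoetherianRing Λ] (n : ℕ)
    (X : ModuleCat.{0} Λ) (ι : Type) (h : HasInjectiveDimensionLE X n) :
    HasInjectiveDimensionLE (ModuleCat.of Λ (ι →₀ X)) n := by
  induction n generalizing X with
  | zero =>
    rw [HasInjectiveDimensionLE, ← injective_iff_hasInjectiveDimensionLT_one,
      ← Module.injective_iff_injective_object] at h ⊢
    exact injective_finsupp X h ι
  | succ n ih =>
    have hS := shortExact_injectiveUnder X
    have h₃ := hS.hasInjectiveDimensionLT_X₃ (n + 1) inferInstance h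
    have hex := (ShortComplex.ShortExact.moduleCat_exact_iff_function_exact _).1 hS.exact
    let T : ShortComplex (ModuleCat Λ) := ModuleCat.shortComplexOfCompEqZero
      (Finsupp.mapRange.linearMap (α := ι) (Injective.ι X).hom)
      (Finsupp.mapRange.linearMap (α := ι) (Limits.cokernel.π (Injective.ι X)).hom)
      (by
        rw [← Finsupp.mapRange.linearMap_comp, ← ModuleCat.hom_comp, Limits.cokernel.condition]
        ext; simp)
    have hT : T.ShortExact := by
      refine ModuleCat.shortComplex_shortExact T ?_ ?_ ?_
      · exact exact_mapRange _ _ hex ((ModuleCat.mono_iff_injective _).1 hS.mono_f)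
      · exact Finsupp.mapRange_injective _ (map_zero _) ((ModuleCat.mono_iff_injective _).1 hS.mono_f)
      · exact Finsupp.mapRange_surjective _ (map_zero _)
          ((ModuleCat.epi_iff_surjective _).1 hS.epi_g)
    refine hT.hasInjectiveDimensionLT_X₁ (n + 1) (ih _ h₃) ?_
    have hI : Module.Injective Λ (Injective.under X : ModuleCat.{0} Λ) :=
      (Module.injective_iff_injective_object _ _).2 (Injective.injective_under X)
    have : Injective T.X₂ :=
      (Module.injective_iff_injective_object _ _).1 (injective_finsupp _ hI ι)
    infer_instance

/-- Bass: over a left Noetherian ring the big finitistic dimension is bounded by the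
self-injective dimension. -/
theorem hasProjectiveDimensionLE_of_idLE {Λ : Type} [Ring Λ] [IsNoetherianRing Λ] (n : ℕ)
    (h : HasInjectiveDimensionLE (ModuleCat.of Λ Λ) n) (M : ModuleCat.{0} Λ) (m : ℕ)
    (hM : HasProjectiveDimensionLE M m) : HasProjectiveDimensionLE M n := by
  induction m with
  | zero => exact hasProjectiveDimensionLT_of_ge M 1 (n + 1) (by lia)
  | succ m ih =>
    rcases Nat.lt_or_ge m n with hmn | hmn
    · exact hasProjectiveDimensionLT_of_ge M (m + 1 + 1) (n + 1) (by lia)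
    refine ih ((pdLE_iff M m).1 fun N => ?_)
    -- `Ext^{m+1}(M, N)` sits between `Ext^{m+1}(M, F) = 0`, with `F` the free module on `N`, and
    -- `Ext^{m+2}(M, K) = 0`, with `K` the kernel of `F → N`.
    rw [subsingleton_extGrp_succ_iff]
    have hS : (Finsupp.linearCombination Λ (id : N → N)).shortComplexKer.ShortExact :=
      LinearMap.shortExact_shortComplexKer (Finsupp.linearCombination_id_surjective Λ N)
    have hF := hasInjectiveDimensionLE_finsupp n (ModuleCat.of Λ Λ) N h
    refine subsingleton_of_forall_eq 0 fun α => ?_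
    obtain ⟨β, rfl⟩ := Abelian.Ext.covariant_sequence_exact₃ M hS α (n₁ := m + 2) rfl
      (Abelian.Ext.eq_zero_of_hasProjectiveDimensionLT _ (m + 2) le_rfl)
    have : β = 0 := (hF.subsingleton _ _ (m + 1) (by lia) M).elim _ _
    rw [this, Abelian.Ext.zero_comp]

/-! ### Resolutions by finitely generated projective modules -/

/-- The resolution of the first syzygy obtained by dropping the degree-zero term. -/
def FGProjRes.shift {S : Type} [Ring S] {M : Type} [AddCommGroup M] [Module S M]
    (R : FGProjRes S M) : FGProjRes S (LinearMap.ker R.π) where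
  P n := R.P (n + 1)
  d n := R.d (n + 1)
  π := (R.d 0).codRestrict (LinearMap.ker R.π)
    fun x => R.exact0 ▸ LinearMap.mem_range_self (R.d 0) x
  surj := by
    rintro ⟨y, hy⟩
    obtain ⟨x, rfl⟩ : y ∈ LinearMap.range (R.d 0) := R.exact0.symm ▸ hy
    exact ⟨x, rfl⟩
  exact0 := by rw [LinearMap.ker_codRestrict]; exact R.exact 0
  exact n := R.exact (n + 1)

/-- Maps out of a cokernel: `f` factors through `p` when it kills `range d = ker p`. -/
theorem exists_factor {S A B C Y : Type*} [Ring S] [AddCommGroup A] [Module S A] [AddCommGroup B]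
    [Module S B] [AddCommGroup C] [Module S C] [AddCommGroup Y] [Module S Y]
    (d : A →ₗ[S] B) (p : B →ₗ[S] C) (hp : Function.Surjective p)
    (hd : LinearMap.range d = LinearMap.ker p) (f : B →ₗ[S] Y) (hf : f ∘ₗ d = 0) :
    ∃ u : C →ₗ[S] Y, u ∘ₗ p = f := by
  have hle : LinearMap.ker p ≤ LinearMap.ker f := by
    rw [← hd]
    exact LinearMap.range_le_ker_iff.2 hf
  refine ⟨(LinearMap.ker p).liftQ f hle ∘ₗ (p.quotKerEquivOfSurjective hp).symm, ?_⟩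
  ext x
  have : (p.quotKerEquivOfSurjective hp).symm (p x) = (LinearMap.ker p).mkQ x := by
    rw [LinearEquiv.symm_apply_eq]; rfl
  simp [this]

/-- If `Hom(M, Y) = 0`, the complex `Hom(P•, Y)` is exact in degree `0`. -/
theorem FGProjRes.exact_zero_of_ext {S : Type} [Ring S] {M : Type} [AddCommGroup M] [Module S M]
    (R : FGProjRes S M) (Y : Type) [AddCommGroup Y] [Module S Y]
    (h : Subsingleton (Abelian.Ext (ModuleCat.of S M) (ModuleCat.of S Y) 0))
    (f : R.P 0 →ₗ[S] Y) (hf : f ∘ₗ R.d 0 = 0) : f = 0 := by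
  obtain ⟨u, rfl⟩ := exists_factor (R.d 0) R.π R.surj R.exact0 f hf
  rw [Abelian.Ext.homEquiv₀.subsingleton_congr] at h
  have : u = 0 := congrArg ModuleCat.Hom.hom (h.elim (ModuleCat.ofHom u) 0)
  rw [this, LinearMap.zero_comp]

/-- `Ext^{n+1}(M, Y)` vanishes iff the complex `Hom(P•, Y)` is exact in degree `n + 1`; the induction
replaces `M` by its first syzygy. -/
theorem FGProjRes.subsingleton_ext_succ_iff {S : Type} [Ring S] {M : Type} [AddCommGroup M]
    [Module S M] (R : FGProjRes S M) (Y : Type) [AddCommGroup Y] [Module S Y] (n : ℕ) :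
    Subsingleton (Abelian.Ext (ModuleCat.of S M) (ModuleCat.of S Y) (n + 1)) ↔
      ∀ f : R.P (n + 1) →ₗ[S] Y, f ∘ₗ R.d (n + 1) = 0 →
        ∃ g : R.P n →ₗ[S] Y, g ∘ₗ R.d n = f := by
  induction n generalizing M with
  | zero =>
    have hS : R.π.shortComplexKer.ShortExact := LinearMap.shortExact_shortComplexKer R.surj
    have : Projective R.π.shortComplexKer.X₂ :=
      (IsProjective.iff_projective (R := S) (R.P 0)).1 inferInstance
    constructor
    · intro h f hf
      obtain ⟨u, rfl⟩ := exists_factor (R.d 1) R.shift.π R.shift.surj R.shift.exact0 f hf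
      obtain ⟨α, hα⟩ := Abelian.Ext.contravariant_sequence_exact₁ hS (ModuleCat.of S Y)
        (Abelian.Ext.mk₀ (ModuleCat.ofHom u)) (n₁ := 1) rfl (h.elim _ _)
      obtain ⟨g, rfl⟩ := Abelian.Ext.homEquiv₀.symm.surjective α
      have hg : R.π.shortComplexKer.f ≫ g = ModuleCat.ofHom u :=
        Abelian.Ext.homEquiv₀.symm.injective (by simpa using hα)
      refine ⟨g.hom, ?_⟩
      ext x
      exact congr($hg (R.shift.π x))
    · intro h
      refine subsingleton_of_forall_eq 0 fun α => ?_
      obtain ⟨β, rfl⟩ := Abelian.Ext.contravariant_sequence_exact₃ hS _ α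
        (Abelian.Ext.eq_zero_of_projective _) (n₀ := 0) rfl
      obtain ⟨u, rfl⟩ := Abelian.Ext.homEquiv₀.symm.surjective β
      obtain ⟨g, hg⟩ := h (u.hom ∘ₗ R.shift.π) <| LinearMap.ext fun x =>
        (congrArg u.hom (LinearMap.congr_fun
          (LinearMap.range_le_ker_iff.1 R.shift.exact0.le) x)).trans (map_zero _)
      have hu : u = R.π.shortComplexKer.f ≫ ModuleCat.ofHom g := by
        ext x
        obtain ⟨y, rfl⟩ := R.shift.surj x
        exact congr($hg.symm y)
      rw [hu, Abelian.Ext.homEquiv₀_symm_apply, ← Abelian.Ext.mk₀_comp_mk₀]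
      exact hS.extClass_comp_assoc _
  | succ n ih =>
    have hS : R.π.shortComplexKer.ShortExact := LinearMap.shortExact_shortComplexKer R.surj
    have : Projective R.π.shortComplexKer.X₂ :=
      (IsProjective.iff_projective (R := S) (R.P 0)).1 inferInstance
    refine Iff.trans ⟨fun h => ?_, fun h => ?_⟩ (ih R.shift)
    · refine subsingleton_of_forall_eq 0 fun α => ?_
      obtain ⟨β, rfl⟩ := Abelian.Ext.contravariant_sequence_exact₁ hS _ α (add_comm 1 (n + 1))
        (h.elim _ _)
      rw [β.eq_zero_of_projective, Abelian.Ext.comp_zero]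
    · have : Subsingleton (Abelian.Ext R.π.shortComplexKer.X₁ (ModuleCat.of S Y) (n + 1)) := h
      exact (precomp_extClass_surjective_of_projective_X₂ _ hS (n + 1)).subsingleton

/-- Over a left Noetherian ring, finitely generated modules have resolutions by finitely generated
free modules. -/
theorem nonempty_fgProjRes {S : Type} [Ring S] [IsNoetherianRing S] (M : Type) [AddCommGroup M]
    [Module S M] [Module.Finite S M] : Nonempty (FGProjRes S M) := by
  have hex : ∀ N : {N : ModuleCat.{0} S // Module.Finite S N},
      ∃ (k : ℕ) (p : (Fin k → S) →ₗ[S] N.1), Function.Surjective p :=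
    fun N => have := N.2; Module.Finite.exists_fin' S N.1
  choose k p hp using hex
  let K : ℕ → {N : ModuleCat.{0} S // Module.Finite S N} := fun n =>
    Nat.rec ⟨ModuleCat.of S M, ‹_›⟩
      (fun _ N => ⟨ModuleCat.of S (LinearMap.ker (p N)),
        inferInstanceAs (Module.Finite S (LinearMap.ker (p N)))⟩) n
  let d : ∀ n, (Fin (k (K (n + 1))) → S) →ₗ[S] (Fin (k (K n)) → S) := fun n =>
    (LinearMap.ker (p (K n))).subtype ∘ₗ p (K (n + 1))
  have hd : ∀ n, LinearMap.range (d n) = LinearMap.ker (p (K n)) := fun n => by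
    rw [LinearMap.range_comp_of_range_eq_top _ (LinearMap.range_eq_top.2 (hp (K (n + 1)))),
      Submodule.range_subtype]
  exact ⟨{ P := fun n => Fin (k (K n)) → S
           d := d
           π := p (K 0)
           surj := hp (K 0)
           exact0 := hd 0
           exact := fun n => (hd (n + 1)).trans
            (LinearMap.ker_comp_of_ker_eq_bot _ (Submodule.ker_subtype _)).symm }⟩

/-! ### Duals of finitely generated projective modules -/

/-- Dual basis for finitely generated projective left modules. -/
theorem exists_dualBasis {S P : Type*} [Ring S] [AddCommGroup P] [Module S P]
    [Module.Finite S P] [Module.Projective S P] :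
    ∃ (k : ℕ) (y : Fin k → P) (ψ : Fin k → P →ₗ[S] S), ∀ p, p = ∑ i, ψ i p • y i := by
  obtain ⟨k, f, g, -, -, h⟩ := Module.Finite.exists_comp_eq_id_of_projective S P
  refine ⟨k, fun i => f fun j => if i = j then 1 else 0, fun i => LinearMap.proj i ∘ₗ g, fun p => ?_⟩
  have := LinearMap.congr_fun h p
  conv_lhs => rw [← LinearMap.id_apply (R := S) p, ← this]
  conv_lhs => rw [LinearMap.comp_apply, LinearMap.pi_apply_eq_sum_univ f]
  rfl

section Right

variable {Λ : Type} [Ring Λ] {P : Type} [AddCommGroup P] [Module Λᵐᵒᵖ P]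

/-- Dual basis for finitely generated projective right modules; right scalars act through
`MulOpposite.op`. -/
theorem exists_dualBasisR [Module.Finite Λᵐᵒᵖ P] [Module.Projective Λᵐᵒᵖ P] :
    ∃ (k : ℕ) (y : Fin k → P) (ψ : Fin k → P →ₗ[Λᵐᵒᵖ] Λ),
      ∀ p, p = ∑ i, MulOpposite.op (ψ i p) • y i := by
  obtain ⟨k, y, ψ, h⟩ := exists_dualBasis (S := Λᵐᵒᵖ) (P := P)
  exact ⟨k, y, fun i => (MulOpposite.opLinearEquiv Λᵐᵒᵖ).symm.toLinearMap ∘ₗ ψ i, h⟩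

/-- The functionals of a dual basis generate the dual module. -/
theorem eq_sum_dualBasisR {k : ℕ} {y : Fin k → P} {ψ : Fin k → P →ₗ[Λᵐᵒᵖ] Λ}
    (h : ∀ p, p = ∑ i, MulOpposite.op (ψ i p) • y i) (φ : P →ₗ[Λᵐᵒᵖ] Λ) :
    φ = ∑ i, φ (y i) • ψ i := by
  ext p
  conv_lhs => rw [h p]
  simp

theorem finite_projective_dualR [Module.Finite Λᵐᵒᵖ P] [Module.Projective Λᵐᵒᵖ P] :
    Module.Finite Λ (P →ₗ[Λᵐᵒᵖ] Λ) ∧ Module.Projective Λ (P →ₗ[Λᵐᵒᵖ] Λ) := by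
  obtain ⟨k, y, ψ, h⟩ := exists_dualBasisR (Λ := Λ) (P := P)
  let i : (P →ₗ[Λᵐᵒᵖ] Λ) →ₗ[Λ] (Fin k → Λ) :=
    { toFun φ j := φ (y j)
      map_add' _ _ := rfl
      map_smul' _ _ := rfl }
  have hi : Fintype.linearCombination Λ ψ ∘ₗ i = LinearMap.id := by
    refine LinearMap.ext fun φ => ?_
    simpa [Fintype.linearCombination_apply, i] using (eq_sum_dualBasisR h φ).symm
  exact ⟨Module.Finite.of_surjective _
    (LinearMap.surjective_of_comp_eq_id i _ hi), Module.Projective.of_split _ _ hi⟩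

end Right

theorem finite_dual {Λ : Type} [Ring Λ] {P : Type} [AddCommGroup P] [Module Λ P]
    [Module.Finite Λ P] [Module.Projective Λ P] : Module.Finite Λᵐᵒᵖ (P →ₗ[Λ] Λ) := by
  obtain ⟨k, y, ψ, h⟩ := exists_dualBasis (S := Λ) (P := P)
  refine Module.Finite.of_surjective (Fintype.linearCombination Λᵐᵒᵖ ψ) fun φ =>
    ⟨fun i => MulOpposite.op (φ (y i)), LinearMap.ext fun p => ?_⟩
  conv_rhs => rw [h p]
  simp [Fintype.linearCombination_apply]

/-- A map of finitely generated projective right modules whose dual is a split monomorphism is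
surjective. In terms of a dual basis `(yᵢ, ψᵢ)` of `Q`, a section is `x ↦ ∑ yᵢ r(ψᵢ)(x)`. -/
theorem surjective_of_retraction {Λ : Type} [Ring Λ] {P Q : Type} [AddCommGroup P] [Module Λᵐᵒᵖ P]
    [AddCommGroup Q] [Module Λᵐᵒᵖ Q] [Module.Finite Λᵐᵒᵖ P] [Module.Projective Λᵐᵒᵖ P]
    [Module.Finite Λᵐᵒᵖ Q] [Module.Projective Λᵐᵒᵖ Q] (d : Q →ₗ[Λᵐᵒᵖ] P)
    (r : (Q →ₗ[Λᵐᵒᵖ] Λ) →ₗ[Λ] (P →ₗ[Λᵐᵒᵖ] Λ)) (hr : r ∘ₗ dualMapR d = LinearMap.id) :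
    Function.Surjective d := by
  obtain ⟨k, y, ψ, h⟩ := exists_dualBasisR (Λ := Λ) (P := Q)
  obtain ⟨l, z, χ, h'⟩ := exists_dualBasisR (Λ := Λ) (P := P)
  intro x
  refine ⟨∑ i, MulOpposite.op (r (ψ i) x) • y i, ?_⟩
  -- Functionals separate the points of `P`, so it suffices to compare values of all `φ`.
  have key (φ : P →ₗ[Λᵐᵒᵖ] Λ) : φ (d (∑ i, MulOpposite.op (r (ψ i) x) • y i)) = φ x := by
    have h₁ : φ ∘ₗ d = ∑ i, φ (d (y i)) • ψ i := eq_sum_dualBasisR h (φ ∘ₗ d)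
    have h₂ : r (φ ∘ₗ d) = φ := LinearMap.congr_fun hr φ
    rw [h₁] at h₂
    conv_rhs => rw [← h₂]
    simp
  refine (h' _).trans (.trans ?_ (h' x).symm)
  simp only [key]

/-! ### Self-injective dimension is bounded by finitistic dimension -/

/-- Let `0 → F 0 → F 1 → ⋯ → F n → F (n + 1)` be exact, with finitely generated projective terms.
If no finitely generated module of finite projective dimension has projective dimension exceeding `n`,
then `F 0 → F 1` splits: the cokernel of the last map has projective dimension at most `n + 1`,
hence at most `n`, and the bound drops by one with each cokernel further to the left. -/
theorem exists_retraction {Λ : Type} [Ring Λ] (n : ℕ)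
    (hfin : ∀ (M : Type) [AddCommGroup M] [Module Λ M] [Module.Finite Λ M],
      (∃ m, HasProjectiveDimensionLE (ModuleCat.of Λ M) m) →
        HasProjectiveDimensionLE (ModuleCat.of Λ M) n)
    (F : ℕ → Type) [∀ i, AddCommGroup (F i)] [∀ i, Module Λ (F i)]
    [∀ i, Module.Finite Λ (F i)] [∀ i, Module.Projective Λ (F i)]
    (d : ∀ i, F i →ₗ[Λ] F (i + 1)) (h₀ : Function.Injective (d 0))
    (h : ∀ i < n, LinearMap.ker (d (i + 1)) = LinearMap.range (d i)) :
    ∃ r : F 1 →ₗ[Λ] F 0, r ∘ₗ d 0 = LinearMap.id := by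
  let C : ℕ → ModuleCat.{0} Λ := fun i => ModuleCat.of Λ (F (i + 1) ⧸ LinearMap.range (d i))
  have hF (i) : HasProjectiveDimensionLT (ModuleCat.of Λ (F i)) 1 := by
    have := (IsProjective.iff_projective (R := Λ) (F i)).1 inferInstance
    exact projective_iff_hasProjectiveDimensionLT_one |>.1 this
  have hseq (i) (hi : i < n) : ∃ S : ShortComplex (ModuleCat.{0} Λ), S.ShortExact ∧ S.X₁ = C i ∧
      S.X₂ = ModuleCat.of Λ (F (i + 1 + 1)) ∧ S.X₃ = C (i + 1) := by
    let j : (F (i + 1) ⧸ LinearMap.range (d i)) →ₗ[Λ] F (i + 1 + 1) :=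
      (LinearMap.range (d i)).liftQ (d (i + 1)) (h i hi).ge
    have hj : LinearMap.range j = LinearMap.range (d (i + 1)) := Submodule.range_liftQ _ _ _
    have hex : Function.Exact j (LinearMap.range (d (i + 1))).mkQ := by
      rw [LinearMap.exact_iff, hj, Submodule.ker_mkQ]
    refine ⟨ModuleCat.shortComplexOfCompEqZero j (LinearMap.range (d (i + 1))).mkQ
      hex.linearMap_comp_eq_zero, ModuleCat.shortComplex_shortExact _ hex ?_
        (Submodule.mkQ_surjective _), rfl, rfl, rfl⟩
    exact LinearMap.ker_eq_bot.1 (Submodule.ker_liftQ_eq_bot _ _ _ (h i hi).le)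
  let S₀ := ModuleCat.shortComplexOfCompEqZero (d 0) (LinearMap.range (d 0)).mkQ
    (LinearMap.range_mkQ_comp _)
  have hex₀ : Function.Exact (d 0) (LinearMap.range (d 0)).mkQ := by
    rw [LinearMap.exact_iff, Submodule.ker_mkQ]
  have hS₀ : S₀.ShortExact := ModuleCat.shortComplex_shortExact _ hex₀ h₀
    (Submodule.mkQ_surjective _)
  -- The terms to the left resolve `C i`, of length `i + 1`.
  have up (i) (hi : i ≤ n) : HasProjectiveDimensionLT (C i) (i + 2) := by
    induction i with
    | zero =>
      have h₁ : HasProjectiveDimensionLT S₀.X₁ 1 := hF 0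
      have h₂ : HasProjectiveDimensionLT S₀.X₂ 2 :=
        have := hF 1
        hasProjectiveDimensionLT_of_ge _ 1 2 (by lia)
      exact hS₀.hasProjectiveDimensionLT_X₃ 1 h₁ h₂
    | succ i ih =>
      obtain ⟨S, hS, e₁, e₂, e₃⟩ := hseq i (by lia)
      rw [← e₃]
      refine hS.hasProjectiveDimensionLT_X₃ (i + 2) (e₁ ▸ ih (by lia)) (e₂ ▸ ?_)
      have := hF (i + 1 + 1)
      exact hasProjectiveDimensionLT_of_ge _ 1 _ (by lia)
  -- The bound on `C n` improves to `n` by hypothesis; every other `C j` is a syzygy of `C (j + 1)`.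
  have down (i) (hi : i ≤ n) : HasProjectiveDimensionLT (C (n - i)) (n - i + 1) := by
    induction i with
    | zero => exact hfin (F (n + 1) ⧸ LinearMap.range (d n)) ⟨n + 1, up n le_rfl⟩
    | succ i ih =>
      obtain ⟨S, hS, e₁, e₂, e₃⟩ := hseq (n - (i + 1)) (by lia)
      have e : n - (i + 1) + 1 = n - i := by lia
      rw [← e₁]
      refine hS.hasProjectiveDimensionLT_X₁ (n - (i + 1) + 1) (e₂ ▸ ?_) (e₃ ▸ ?_)
      · have := hF (n - (i + 1) + 1 + 1)
        exact hasProjectiveDimensionLT_of_ge _ 1 _ (by lia)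
      · rw [e]
        exact ih (by lia)
  have hC : HasProjectiveDimensionLT (C 0) 1 := by simpa using down n le_rfl
  have : Module.Projective Λ (F 1 ⧸ LinearMap.range (d 0)) :=
    (IsProjective.iff_projective (R := Λ) _).2
      ((projective_iff_hasProjectiveDimensionLT_one).2 hC)
  obtain ⟨s, hs⟩ := Module.projective_lifting_property (LinearMap.range (d 0)).mkQ
    LinearMap.id (Submodule.mkQ_surjective _)
  exact ((hex₀.split_tfae'.out 0 1 rfl rfl).1 ⟨h₀, s, hs⟩).2

/-- A finitely generated right module `N` with `Ext^j(N, Λ) = 0` for all `j ≤ n` vanishes as soon as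
`fin.dim Λ ≤ n`. -/
theorem subsingleton_of_ext {Λ : Type} [Ring Λ] [IsNoetherianRing Λᵐᵒᵖ] (n : ℕ)
    (hfin : ∀ (M : Type) [AddCommGroup M] [Module Λ M] [Module.Finite Λ M],
      (∃ m, HasProjectiveDimensionLE (ModuleCat.of Λ M) m) →
        HasProjectiveDimensionLE (ModuleCat.of Λ M) n)
    (N : Type) [AddCommGroup N] [Module Λᵐᵒᵖ N] [Module.Finite Λᵐᵒᵖ N]
    (h : ∀ j ≤ n, Subsingleton
      (Abelian.Ext (ModuleCat.of Λᵐᵒᵖ N) (ModuleCat.of Λᵐᵒᵖ Λ) j)) : Subsingleton N := by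
  obtain ⟨R⟩ := nonempty_fgProjRes (S := Λᵐᵒᵖ) N
  have hf (i : ℕ) : Module.Finite Λ (R.P i →ₗ[Λᵐᵒᵖ] Λ) := finite_projective_dualR.1
  have hp (i : ℕ) : Module.Projective Λ (R.P i →ₗ[Λᵐᵒᵖ] Λ) := finite_projective_dualR.2
  obtain ⟨r, hr⟩ := exists_retraction n hfin (fun i => R.P i →ₗ[Λᵐᵒᵖ] Λ)
    (fun i => dualMapR (R.d i))
    ((injective_iff_map_eq_zero _).2 (R.exact_zero_of_ext Λ (h 0 n.zero_le)))
    (fun i hi => le_antisymm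
      (fun f hf => (R.subsingleton_ext_succ_iff Λ i).1 (h (i + 1) hi) f hf) <| by
        rintro _ ⟨g, rfl⟩
        refine LinearMap.ext fun x => ?_
        have : R.d i (R.d (i + 1) x) = 0 :=
          LinearMap.congr_fun (LinearMap.range_le_ker_iff.1 (R.exact i).le) x
        exact (congrArg g this).trans (map_zero g))
  have hd := surjective_of_retraction (R.d 0) r hr
  refine subsingleton_of_forall_eq 0 fun x => ?_
  obtain ⟨y, rfl⟩ := R.surj x
  obtain ⟨z, rfl⟩ := hd y
  exact LinearMap.congr_fun (LinearMap.range_le_ker_iff.1 R.exact0.le) z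

theorem subsingleton_ext_of_extGrp {Λ : Type} [Ring Λ] (X Y : ModuleCat Λ) (j : ℕ)
    (h : Subsingleton (extGrp Λ j X Y)) : Subsingleton (Abelian.Ext X Y j) := by
  cases j with
  | zero => exact (subsingleton_extGrp_zero_iff X Y).1 h
  | succ j => exact (subsingleton_extGrp_succ_iff j X Y).1 h

/-- For an `∞`-Gorenstein ring, the left self-injective dimension is at most `fin.dim Λ`. -/
theorem hasInjectiveDimensionLE_of_fin {Λ : Type} [Ring Λ] [IsNoetherianRing Λ]
    [IsNoetherianRing Λᵐᵒᵖ] (hG : ∀ m, IsGorensteinLE Λ m) (n : ℕ)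
    (hfin : ∀ (M : Type) [AddCommGroup M] [Module Λ M] [Module.Finite Λ M],
      (∃ m, HasProjectiveDimensionLE (ModuleCat.of Λ M) m) →
        HasProjectiveDimensionLE (ModuleCat.of Λ M) n) :
    HasInjectiveDimensionLE (ModuleCat.of Λ Λ) n := by
  refine hasInjectiveDimensionLE_of_finite n _ fun M _ => ?_
  obtain ⟨R⟩ := nonempty_fgProjRes (S := Λ) M
  have := finite_dual (Λ := Λ) (P := R.P (n + 1))
  have hE : Subsingleton (⊤ : Submodule Λᵐᵒᵖ (R.extQ (n + 1))) :=
    subsingleton_of_ext n hfin _ fun j hj => subsingleton_ext_of_extGrp _ _ _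
      (hG (n + 1) M R (n + 1) (by lia) le_rfl ⊤ j (by lia))
  have hQ : Subsingleton (R.extQ (n + 1)) :=
    (Submodule.topEquiv (R := Λᵐᵒᵖ) (M := R.extQ (n + 1))).symm.injective.subsingleton
  have htop : R.extBdry (n + 1) = ⊤ := Submodule.Quotient.subsingleton_iff.1 hQ
  refine (R.subsingleton_ext_succ_iff Λ n).2 fun f hf => ?_
  -- Every cocycle is a coboundary, since `E = Ext^{n+1}(M, Λ)` vanishes.
  have hmem : (⟨f, hf⟩ : R.extSub (n + 1)) ∈ R.extBdry (n + 1) := htop ▸ Submodule.mem_top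
  exact hmem

/-- For an `∞`-Gorenstein ring, `fin.dim Λ = Fin.dim Λ = id_Λ Λ` (stated as the
equality of the three dimensions via their comparisons with every `n : ℕ`). -/
theorem stmt_7 (Λ : Type) [Ring Λ] [IsNoetherianRing Λ] [IsNoetherianRing Λᵐᵒᵖ]
    (hG : ∀ m, IsGorensteinLE Λ m) :
    ∀ n : ℕ,
      ((∀ (M : Type) [AddCommGroup M] [Module Λ M] [Module.Finite Λ M],
          (∃ m, pdLE Λ (ModuleCat.of Λ M) m) → pdLE Λ (ModuleCat.of Λ M) n) ↔
        (∀ M : ModuleCat Λ, (∃ m, pdLE Λ M m) → pdLE Λ M n)) ∧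
      ((∀ M : ModuleCat Λ, (∃ m, pdLE Λ M m) → pdLE Λ M n) ↔ idLambdaLE Λ n) := by
  intro n
  simp only [pdLE_iff, idLambdaLE_iff]
  have big (h : HasInjectiveDimensionLE (ModuleCat.of Λ Λ) n) (M : ModuleCat Λ)
      (hM : ∃ m, HasProjectiveDimensionLE M m) : HasProjectiveDimensionLE M n :=
    hM.elim fun m hm => hasProjectiveDimensionLE_of_idLE n h M m hm
  refine ⟨⟨fun h => big (hasInjectiveDimensionLE_of_fin hG n h), fun h M => ?_⟩,
    fun h => hasInjectiveDimensionLE_of_fin hG n fun M => ?_, big⟩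
  all_goals
    intro _ _ _
    exact h (ModuleCat.of Λ M)
end

section
/- Let Λ be a left quasi ∞-Gorenstein left and right Noetherian ring and M a finitely generated left Λ-module with grade M = t finite. Then grade Ext^t_Λ(M, Λ) = t, where the grade of the right module Ext^t_Λ(M, Λ) is computed over Λ^op. -/
/-!
Write `(-)*` for `Hom(-, Λ)`, let `P•` be the given resolution of `M` and put `E = Ext^t(M, Λ)`.
That `Ext^j(E, Λ) = 0` for `j < t` is the quasi `∞`-Gorenstein hypothesis for `i = t` (and is
vacuous for `t = 0`). The remaining claim is `Ext^t(E, Λ) ≠ 0`.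

Since `grade M = t`, the complex `P₀* → ⋯ → P_t*` is exact before its last term, so the inclusion of
`E` into `Coker(P_{t-1}* → P_t*)` lifts to a chain map from a projective resolution `Q•` of `E` to
`P_{t-•}*`. Its adjoint is a map of complexes `P• → Q_{t-•}*`. If `Ext^t(E, Λ)` were zero too, then
`Q•*` would be exact in all degrees `≤ t`, so by projectivity of the `P_j` this adjoint would be
null-homotopic; transposing the homotopy back, `Q₀ → P_t*` would land in the image of `P_{t-1}*`.
Hence `E = 0`, contradicting `Ext^t(M, Λ) ≠ 0`.

`exists_bdry_correction` builds the chain map and the homotopy in one induction, treating a map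
`Q_i → P_j*` and its adjoint `P_j → Q_i*` as the same pairing. `subsingleton_extGrp_iff` and
`FGProjRes.toRes` translate vanishing of the derived functor `extGrp` into exactness of the
dualized resolutions.
-/

open CategoryTheory

open LinearMap

/-- `f : X n → N` is a coboundary of the cochain complex `Hom(X•, N)`; there is nothing in
degree `-1`, so in degree `0` this means `f = 0`. -/
def IsBdry {A : Type} [Ring A] {X : ℕ → Type} [∀ n, AddCommGroup (X n)] [∀ n, Module A (X n)]
    (d : ∀ n, X (n + 1) →ₗ[A] X n) {N : Type} [AddCommGroup N] [Module A N] :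
    (n : ℕ) → (X n →ₗ[A] N) → Prop
  | 0, f => f = 0
  | n + 1, f => ∃ g : X n →ₗ[A] N, f = g ∘ₗ d n

/-- The differentials of a projective resolution in `ModuleCat A`, as linear maps. -/
abbrev resD {A : Type} [Ring A] {Z : ModuleCat.{0} A} (R : ProjectiveResolution Z) (n : ℕ) :
    R.complex.X (n + 1) →ₗ[A] R.complex.X n :=
  (R.complex.d (n + 1) n).hom

/-- Vanishing of `Ext` is exactness of the dualized resolution, for any projective resolution. -/
lemma subsingleton_extGrp_iff {A : Type} [Ring A] {Z N : ModuleCat.{0} A}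
    (R : ProjectiveResolution Z) (n : ℕ) :
    Subsingleton (extGrp A n Z N) ↔
      ∀ f : R.complex.X n →ₗ[A] N, f ∘ₗ resD R n = 0 →
        IsBdry (X := fun n => R.complex.X n) (resD R) n f := by
  have e := R.isoExt (R := ℤ) n N
  unfold extGrp
  rw [← ModuleCat.isZero_iff_subsingleton, e.isZero_iff,
    ← HomologicalComplex.exactAt_iff_isZero_homology]
  cases n with
  | zero =>
    rw [HomologicalComplex.exactAt_iff' _ 0 0 1 (by simp) (by simp),
      ShortComplex.moduleCat_exact_iff]
    constructor
    · intro h f hf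
      obtain ⟨g, hg⟩ := h (ModuleCat.ofHom f) (ModuleCat.hom_ext hf)
      have : ModuleCat.ofHom f = 0 := by
        rw [← hg]
        change ((R.complex.linearYonedaObj ℤ N).d 0 0) g = 0
        rw [HomologicalComplex.shape _ _ _ (by simp)]
        rfl
      exact congrArg ModuleCat.Hom.hom this
    · intro h f hf
      refine ⟨0, ?_⟩
      rw [map_zero]
      exact (ModuleCat.hom_ext (h (ModuleCat.Hom.hom f) (congrArg ModuleCat.Hom.hom hf))).symm
  | succ n =>
    rw [HomologicalComplex.exactAt_iff' _ n (n + 1) (n + 2) (by simp) (by simp),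
      ShortComplex.moduleCat_exact_iff]
    constructor
    · intro h f hf
      obtain ⟨g, hg⟩ := h (ModuleCat.ofHom f) (ModuleCat.hom_ext hf)
      exact ⟨ModuleCat.Hom.hom g, (congrArg ModuleCat.Hom.hom hg).symm⟩
    · intro h f hf
      obtain ⟨g, hg⟩ := h (ModuleCat.Hom.hom f) (congrArg ModuleCat.Hom.hom hf)
      exact ⟨ModuleCat.ofHom g, (ModuleCat.hom_ext hg).symm⟩

lemma FGProjRes.d_comp_d {Λ : Type} [Ring Λ] {M : Type} [AddCommGroup M] [Module Λ M]
    (R : FGProjRes Λ M) (n : ℕ) : R.d n ∘ₗ R.d (n + 1) = 0 :=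
  LinearMap.range_le_ker_iff.1 (R.exact n).le

/-- The chain complex underlying an `FGProjRes`. -/
def FGProjRes.cpx {Λ : Type} [Ring Λ] {M : Type} [AddCommGroup M] [Module Λ M]
    (R : FGProjRes Λ M) : ChainComplex (ModuleCat.{0} Λ) ℕ :=
  ChainComplex.of (fun n => ModuleCat.of Λ (R.P n)) (fun n => ModuleCat.ofHom (R.d n))
    (fun n => ModuleCat.hom_ext (R.d_comp_d n))

lemma FGProjRes.cpx_d {Λ : Type} [Ring Λ] {M : Type} [AddCommGroup M] [Module Λ M]
    (R : FGProjRes Λ M) (n : ℕ) : R.cpx.d (n + 1) n = ModuleCat.ofHom (R.d n) :=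
  ChainComplex.of_d (fun n => ModuleCat.of Λ (R.P n)) (fun n => ModuleCat.ofHom (R.d n)) n

/-- An `FGProjRes` as a categorical projective resolution. -/
noncomputable def FGProjRes.toRes {Λ : Type} [Ring Λ] {M : Type} [AddCommGroup M] [Module Λ M]
    (R : FGProjRes Λ M) : ProjectiveResolution (ModuleCat.of Λ M) where
  complex := R.cpx
  projective n := (IsProjective.iff_projective (R.P n)).1 (R.proj n)
  π := (ChainComplex.toSingle₀Equiv _ _).symm ⟨ModuleCat.ofHom R.π, by
    rw [R.cpx_d]
    exact ModuleCat.hom_ext (LinearMap.range_le_ker_iff.1 R.exact0.le)⟩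
  quasiIso := ⟨fun n => by
    cases n with
    | zero =>
      rw [ChainComplex.quasiIsoAt₀_iff, ShortComplex.quasiIso_iff_of_zeros' _ rfl rfl rfl]
      refine ⟨?_, ?_⟩
      · rw [ShortComplex.moduleCat_exact_iff]
        intro x hx
        obtain ⟨y, hy⟩ := R.exact0.ge (show x ∈ ker R.π from hx)
        exact ⟨y, (congrArg (fun g => ModuleCat.Hom.hom g y) (R.cpx_d 0)).trans hy⟩
      · exact (ModuleCat.epi_iff_surjective (ModuleCat.ofHom R.π)).2 R.surj
    | succ n =>
      rw [quasiIsoAt_iff_exactAt' _ _ (ChainComplex.exactAt_succ_single_obj _ _),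
        HomologicalComplex.exactAt_iff' _ (n + 2) (n + 1) n (by simp) (by simp),
        ShortComplex.moduleCat_exact_iff]
      intro x hx
      have hx' : R.d n x = 0 :=
        (congrArg (fun g => ModuleCat.Hom.hom g x) (R.cpx_d n)).symm.trans hx
      obtain ⟨y, hy⟩ := (R.exact n).ge (show x ∈ ker (R.d n) from hx')
      exact ⟨y, (congrArg (fun g => ModuleCat.Hom.hom g y) (R.cpx_d (n + 1))).trans hy⟩⟩

lemma FGProjRes.resD_toRes {Λ : Type} [Ring Λ] {M : Type} [AddCommGroup M] [Module Λ M]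
    (R : FGProjRes Λ M) (n : ℕ) : resD R.toRes n = R.d n :=
  congrArg ModuleCat.Hom.hom (R.cpx_d n)

lemma FGProjRes.subsingleton_extGrp_iff {Λ : Type} [Ring Λ] {M : Type} [AddCommGroup M]
    [Module Λ M] (R : FGProjRes Λ M) (n : ℕ) (N : Type) [AddCommGroup N] [Module Λ N] :
    Subsingleton (extGrp Λ n (ModuleCat.of Λ M) (ModuleCat.of Λ N)) ↔
      ∀ f : R.P n →ₗ[Λ] N, f ∘ₗ R.d n = 0 → IsBdry R.d n f := by
  have h : resD R.toRes = R.d := funext R.resD_toRes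
  rw [_root_.subsingleton_extGrp_iff R.toRes n, h]
  rfl

/-- Maps out of a projective module lift along `f` as soon as they do so pointwise. -/
lemma exists_lift {A P B C : Type} [Ring A] [AddCommGroup P] [Module A P] [Module.Projective A P]
    [AddCommGroup B] [Module A B] [AddCommGroup C] [Module A C] (f : B →ₗ[A] C) (g : P →ₗ[A] C)
    (h : ∀ p, ∃ b, f b = g p) : ∃ k : P →ₗ[A] B, ∀ p, f (k p) = g p := by
  obtain ⟨k, hk⟩ := Module.projective_lifting_property f.rangeRestrict
    (g.codRestrict (range f) h) f.surjective_rangeRestrict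
  exact ⟨k, fun p => congrArg Subtype.val (LinearMap.congr_fun hk p)⟩

/-- The homotopy argument. Let `P•` and `Q•` be complexes of projective left and right modules,
the duals being exact in degrees `< t` and `≤ t` respectively. A map `φ : Q i → (P j)*`, `i + j = t`,
sending boundaries of `Q i` to coboundaries, becomes coboundary-valued after subtracting a
pairing `g` which is a coboundary in the variable of `Q i`. -/
lemma exists_bdry_correction {Λ : Type} [Ring Λ] {P Q : ℕ → Type}
    [∀ n, AddCommGroup (P n)] [∀ n, Module Λ (P n)] [∀ n, Module.Projective Λ (P n)]
    [∀ n, AddCommGroup (Q n)] [∀ n, Module Λᵐᵒᵖ (Q n)] [∀ n, Module.Projective Λᵐᵒᵖ (Q n)]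
    (dP : ∀ n, P (n + 1) →ₗ[Λ] P n) (dQ : ∀ n, Q (n + 1) →ₗ[Λᵐᵒᵖ] Q n) (t : ℕ)
    (hdP : ∀ n, dP n ∘ₗ dP (n + 1) = 0) (hdQ : ∀ n, dQ n ∘ₗ dQ (n + 1) = 0)
    (hP : ∀ j < t, ∀ f : P j →ₗ[Λ] Λ, f ∘ₗ dP j = 0 → IsBdry dP j f)
    (hQ : ∀ i ≤ t, ∀ f : Q i →ₗ[Λᵐᵒᵖ] Λ, f ∘ₗ dQ i = 0 → IsBdry dQ i f) (j : ℕ) :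
    ∀ i, i + j = t → ∀ φ : Q i →ₗ[Λᵐᵒᵖ] (P j →ₗ[Λ] Λ), (∀ q, IsBdry dP j (φ (dQ i q))) →
      ∃ g : P j →ₗ[Λ] (Q i →ₗ[Λᵐᵒᵖ] Λ), (∀ p, IsBdry dQ i (g p)) ∧
        ∀ q, IsBdry dP j (φ q - evalR Λ (Q i) q ∘ₗ g) := by
  induction j with
  | zero =>
    intro i hi φ hφ
    refine ⟨dualMapR φ ∘ₗ evalL Λ (P 0), fun p => hQ i (by omega) _ ?_, fun q => ?_⟩
    · ext q
      exact LinearMap.congr_fun (hφ q) p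
    · exact sub_self (φ q)
  | succ j ih =>
    intro i hi φ hφ
    obtain ⟨φ', hφ'⟩ := exists_lift (dualMap (dP j)) (φ ∘ₗ dQ i)
      (fun q => (hφ q).imp fun _ h => h.symm)
    obtain ⟨g', hg', hφg⟩ := ih (i + 1) (by omega) φ' fun q => by
      refine hP j (by omega) _ ((hφ' (dQ (i + 1) q)).trans ?_)
      rw [LinearMap.comp_apply, ← LinearMap.comp_apply (dQ i), hdQ, LinearMap.zero_apply, map_zero]
    obtain ⟨h, hh⟩ := exists_lift (dualMapR (dQ i)) g' fun p => (hg' p).imp fun _ h => h.symm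
    refine ⟨dualMapR φ ∘ₗ evalL Λ (P (j + 1)) - h ∘ₗ dP j, fun p => hQ i (by omega) _ ?_,
      fun q => ⟨evalR Λ (Q i) q ∘ₗ h, ?_⟩⟩
    · ext q
      -- coboundaries in degree `j` vanish on the image of `dP j`
      have key : (φ' q - evalR Λ (Q (i + 1)) q ∘ₗ g') (dP j p) = 0 := by
        have := hφg q
        cases j with
        | zero => rw [show _ = _ from this]; rfl
        | succ j =>
          obtain ⟨k, hk⟩ := this
          rw [hk, LinearMap.comp_apply, ← LinearMap.comp_apply (dP j), hdP,
            LinearMap.zero_apply, map_zero]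
      have h1 : φ' q (dP j p) = φ (dQ i q) p := LinearMap.congr_fun (hφ' q) p
      have h2 : h (dP j p) (dQ i q) = g' (dP j p) q := LinearMap.congr_fun (hh (dP j p)) q
      change φ (dQ i q) p - h (dP j p) (dQ i q) = 0
      rw [← h1, h2]
      exact key
    · ext p
      change φ q p - (φ q p - h (dP j p) q) = h (dP j p) q
      exact sub_sub_cancel _ _

lemma FGProjRes.mem_extBdry_iff {Λ : Type} [Ring Λ] {M : Type} [AddCommGroup M] [Module Λ M]
    (R : FGProjRes Λ M) (t : ℕ) (f : R.extSub t) : f ∈ R.extBdry t ↔ IsBdry R.d t f.1 := by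
  cases t with
  | zero => exact (Submodule.mem_bot _).trans Subtype.ext_iff
  | succ t => exact exists_congr fun _ => eq_comm

/-- A quotient `E` of the cocycles by exactly the coboundaries, i.e. a model of `Ext^t(M, Λ)`, can
only have `Ext^i(E, Λ) = 0` for all `i ≤ t` if it is itself zero. -/
lemma subsingleton_extGrp_of_grade_gt {Λ : Type} [Ring Λ] {M : Type} [AddCommGroup M] [Module Λ M]
    (R : FGProjRes Λ M) (t : ℕ)
    (hlow : ∀ j < t, Subsingleton (extGrp Λ j (ModuleCat.of Λ M) (ModuleCat.of Λ Λ)))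
    (E : Type) [AddCommGroup E] [Module Λᵐᵒᵖ E] (p : R.extSub t →ₗ[Λᵐᵒᵖ] E)
    (hp : Function.Surjective p) (hp0 : ∀ f, p f = 0 ↔ IsBdry R.d t f.1)
    (hE : ∀ i ≤ t, Subsingleton (extGrp Λᵐᵒᵖ i (ModuleCat.of Λᵐᵒᵖ E) (ModuleCat.of Λᵐᵒᵖ Λ))) :
    Subsingleton (extGrp Λ t (ModuleCat.of Λ M) (ModuleCat.of Λ Λ)) := by
  rw [R.subsingleton_extGrp_iff]
  intro f hf
  let S := ProjectiveResolution.of (ModuleCat.of Λᵐᵒᵖ E)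
  have hS : ∀ n, Module.Projective Λᵐᵒᵖ (S.complex.X n) := fun n =>
    (IsProjective.iff_projective (S.complex.X n)).2 (S.projective n)
  obtain ⟨π, hπ, hπd⟩ : ∃ π : S.complex.X 0 →ₗ[Λᵐᵒᵖ] E,
      Function.Surjective π ∧ π ∘ₗ resD S 0 = 0 :=
    ⟨(S.π.f 0).hom, (ModuleCat.epi_iff_surjective (S.π.f 0)).1 inferInstance,
      congrArg ModuleCat.Hom.hom S.complex_d_comp_π_f_zero⟩
  -- lift the augmentation to a map from `S₀` to the cocycles of `Hom(P t, Λ)`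
  obtain ⟨φ, hφ⟩ := Module.projective_lifting_property p π hp
  have hker : ∀ q, π q = 0 ↔ IsBdry R.d t (φ q).1 := fun q => by
    rw [← hp0, ← hφ, LinearMap.comp_apply]
  obtain ⟨g, hg, hφg⟩ := exists_bdry_correction (Q := fun n => S.complex.X n) R.d (resD S) t
    R.d_comp_d (fun n => congrArg ModuleCat.Hom.hom (S.complex.d_comp_d (n + 2) (n + 1) n))
    (fun j hj => (R.subsingleton_extGrp_iff j Λ).1 (hlow j hj))
    (fun i hi => (subsingleton_extGrp_iff S i).1 (hE i hi))
    t 0 (by omega) ((R.extSub t).subtype ∘ₗ φ)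
    (fun q => (hker _).1 (LinearMap.congr_fun hπd q))
  -- there are no nonzero coboundaries in degree `0`
  have hg0 : g = 0 := LinearMap.ext hg
  obtain ⟨q, hq⟩ := hπ (p ⟨f, hf⟩)
  have hq0 : π q = 0 := (hker q).2 (by simpa [hg0] using hφg q)
  exact (hp0 ⟨f, hf⟩).1 (hq ▸ hq0)

/-- The quotient map onto `R.extQ t`. The instances on the cocycles are given explicitly, since
unification does not find `MulOpposite.instRing` from the semiring structure in `R.extBdry`. -/
lemma FGProjRes.exists_extQ_mk {Λ : Type} [Ring Λ] {M : Type} [AddCommGroup M] [Module Λ M]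
    (R : FGProjRes Λ M) (t : ℕ) : ∃ p : R.extSub t →ₗ[Λᵐᵒᵖ] R.extQ t,
      Function.Surjective p ∧ ∀ f, p f = 0 ↔ f ∈ R.extBdry t :=
  ⟨@Submodule.mkQ Λᵐᵒᵖ (R.extSub t) MulOpposite.instRing (R.extSub t).addCommGroup
      (R.extSub t).module (R.extBdry t),
    @Submodule.mkQ_surjective Λᵐᵒᵖ (R.extSub t) MulOpposite.instRing (R.extSub t).addCommGroup
      (R.extSub t).module (R.extBdry t),
    fun f => @Submodule.Quotient.mk_eq_zero Λᵐᵒᵖ (R.extSub t) f MulOpposite.instRing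
      (R.extSub t).addCommGroup (R.extSub t).module (R.extBdry t)⟩

/-- Over a left quasi `∞`-Gorenstein ring, if `grade M = t` is finite then
`grade Ext^t_Λ(M, Λ) = t`. -/
theorem stmt_10 (Λ : Type) [Ring Λ] [IsNoetherianRing Λ] [IsNoetherianRing Λᵐᵒᵖ]
    (hQ : LeftQuasiInfGorenstein Λ)
    (M : Type) [AddCommGroup M] [Module Λ M] [Module.Finite Λ M] (t : ℕ)
    (hlow : ∀ j < t, Subsingleton (extGrp Λ j (ModuleCat.of Λ M) (ModuleCat.of Λ Λ)))
    (hne : Nontrivial (extGrp Λ t (ModuleCat.of Λ M) (ModuleCat.of Λ Λ))) :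
    ∀ R : FGProjRes Λ M,
      (∀ j < t, Subsingleton
        (extGrp Λᵐᵒᵖ j (ModuleCat.of Λᵐᵒᵖ (R.extQ t)) (ModuleCat.of Λᵐᵒᵖ Λ))) ∧
      Nontrivial (extGrp Λᵐᵒᵖ t (ModuleCat.of Λᵐᵒᵖ (R.extQ t)) (ModuleCat.of Λᵐᵒᵖ Λ)) := by
  intro R
  have hE : ∀ j < t, Subsingleton
      (extGrp Λᵐᵒᵖ j (ModuleCat.of Λᵐᵒᵖ (R.extQ t)) (ModuleCat.of Λᵐᵒᵖ Λ)) :=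
    fun j hj => hQ M R t (by omega) j hj
  refine ⟨hE, ?_⟩
  by_contra hN
  rw [not_nontrivial_iff_subsingleton] at hN
  obtain ⟨p, hp, hp0⟩ := R.exists_extQ_mk t
  refine not_nontrivial_iff_subsingleton.2
    (subsingleton_extGrp_of_grade_gt R t hlow (R.extQ t) p hp
      (fun f => (hp0 f).trans (R.mem_extBdry_iff t f)) fun i hi => ?_) hne
  rcases hi.lt_or_eq with hi | rfl
  exacts [hE i hi, hN]
end

section
/- Let Λ be a left quasi ∞-Gorenstein left and right Noetherian ring with right self-injective dimension id_{Λ^op} Λ = t < ∞. If M is a finitely generated left Λ-module with grade M = t, then M ≅ Ext^t_{Λ^op}(Ext^t_Λ(M, Λ), Λ). -/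
/-!
The isomorphism is proved by comparing two complexes of projective right modules. Dualize
`P_• → M` and write `P_n^* = Hom(P_n, Λ)`. Since `Ext^j(M, Λ) = 0` for `j < t`, the complex
`0 → P_0^* → ⋯ → P_t^*` is exact before its last term, and `Ext^t(M, Λ) = Z/B` with
`Z = ker (P_t^* → P_{t+1}^*)`. The projective resolution `S_•` of `Z/B` maps to it by a chain map
with components `c_i : S_i → P_{t-i}^*`, and the mapping cone of this map resolves `Z`. Continued
by `P_t^* → P_{t+1}^*`, it resolves the image `I` of the latter map, and `P_{t+1}^*` is projective.

As `id Λ ≤ t` on the right, `Ext^{t+1}` and `Ext^{t+2}` into `Λ` vanish for `P_{t+1}^*/I`. Shifting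
dimensions along the cone turns this into vanishing of `Ext^1` at the two places around
`P_0^* ⊕ S_{t-1}`: every functional on a module of boundaries there extends to the next term of
the cone (`ConeStage.exists_functional`, `ConeStage.exists_factor`). Finitely generated projectives
are reflexive, so `p ↦ ev_p ∘ c_t` is a map `P_0 ≅ P_0^{**} → Hom(S_t, Λ)` into the cocycles. The
first extension property makes it surjective onto `Ext^t(Z/B, Λ)`; the second shows that its kernel
is the image of `P_1 ≅ P_1^{**}`. Hence `M = P_0 / im P_1 ≅ Ext^t(Ext^t(M, Λ), Λ)`.

The cone is never formed as a complex: `ConeStage` records one of its degrees together with the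
vanishing of Ext there, `ConeStage.step` passes to the next degree, and `exists_coneStage` iterates.
-/

open CategoryTheory

/-! ### Vanishing of Ext into a fixed module -/

/-- `Ext^k_A(X, N) = 0`, for Mathlib's derived-category `Ext` (which has long exact sequences). -/
def ExtVan (A : Type) [Ring A] (N : Type) [AddCommGroup N] [Module A N] (k : ℕ)
    (X : Type) [AddCommGroup X] [Module A X] : Prop :=
  Subsingleton (Abelian.Ext (ModuleCat.of A X) (ModuleCat.of A N) k)

section ExtVan

variable {A : Type} [Ring A] {N : Type} [AddCommGroup N] [Module A N]

/-- The derived-functor `Ext` and the derived-category `Ext` are both computed by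
`Hom` out of one projective resolution, so vanishing of the former gives vanishing of the latter. -/
lemma extVan_of_extGrp (k : ℕ) (X : Type) [AddCommGroup X] [Module A X]
    (h : Subsingleton (extGrp A k (ModuleCat.of A X) (ModuleCat.of A N))) : ExtVan A N k X := by
  let R := ProjectiveResolution.of (ModuleCat.of A X)
  have e := R.isoExt (R := ℤ) k (ModuleCat.of A N)
  have hz : Limits.IsZero ((R.complex.linearYonedaObj ℤ (ModuleCat.of A N)).homology k) := by
    refine Limits.IsZero.of_iso ?_ e.symm
    exact (ModuleCat.isZero_of_iff_subsingleton (R := ℤ)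
      (M := extGrp A k (ModuleCat.of A X) (ModuleCat.of A N))).2 h
  rw [← HomologicalComplex.exactAt_iff_isZero_homology] at hz
  refine subsingleton_of_forall_eq 0 fun α => ?_
  obtain ⟨f, hf, rfl⟩ := R.extMk_surjective α (k + 1) rfl
  cases k with
  | zero =>
    rw [HomologicalComplex.exactAt_iff' _ 0 0 1 (by simp) (by simp),
      ShortComplex.moduleCat_exact_iff] at hz
    obtain ⟨g, hg⟩ := hz f hf
    have h0 : (R.complex.linearYonedaObj ℤ (ModuleCat.of A N)).d 0 0 = 0 :=
      HomologicalComplex.shape _ _ _ (by simp)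
    have : f = 0 := by
      rw [← hg]
      change ((R.complex.linearYonedaObj ℤ (ModuleCat.of A N)).d 0 0) g = 0
      rw [h0]; rfl
    subst this
    exact R.extMk_zero _ _
  | succ k =>
    rw [HomologicalComplex.exactAt_iff' _ k (k+1) (k+2) (by simp) (by simp),
      ShortComplex.moduleCat_exact_iff] at hz
    obtain ⟨g, hg⟩ := hz f hf
    exact (R.extMk_eq_zero_iff f _ rfl hf k rfl).2 ⟨g, hg⟩

/-- The short exact sequence `0 → B → Y → Y/B → 0`. -/
lemma shortExact_quot {Y : Type} [AddCommGroup Y] [Module A Y] (B : Submodule A Y) :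
    (ShortComplex.mk (ModuleCat.ofHom B.subtype) (ModuleCat.ofHom B.mkQ)
      (by ext x; simp)).ShortExact := by
  refine ModuleCat.shortComplex_shortExact _ ?_ ?_ ?_
  · exact LinearMap.exact_subtype_mkQ B
  · exact B.subtype_injective
  · exact B.mkQ_surjective

lemma ExtVan.congr {k : ℕ} {X Y : Type} [AddCommGroup X] [Module A X] [AddCommGroup Y]
    [Module A Y] (e : X ≃ₗ[A] Y) (h : ExtVan A N k X) : ExtVan A N k Y := by
  refine subsingleton_of_forall_eq 0 fun α => ?_
  have h1 : (Abelian.Ext.mk₀ (ModuleCat.ofHom e.toLinearMap)).comp α (zero_add k) = 0 :=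
    h.elim _ _
  have h2 : ModuleCat.ofHom e.symm.toLinearMap ≫ ModuleCat.ofHom e.toLinearMap =
      𝟙 (ModuleCat.of A Y) := by ext x; simp
  rw [← Abelian.Ext.mk₀_id_comp α, ← h2, ← Abelian.Ext.mk₀_comp_mk₀_assoc, h1,
    Abelian.Ext.comp_zero]

lemma ExtVan.of_quot {Y : Type} [AddCommGroup Y] [Module A Y] [Module.Projective A Y]
    (B : Submodule A Y) {k : ℕ} (h : ExtVan A N (k + 2) (Y ⧸ B)) : ExtVan A N (k + 1) B := by
  refine subsingleton_of_forall_eq 0 fun α => ?_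
  obtain ⟨β, rfl⟩ := Abelian.Ext.contravariant_sequence_exact₁ (shortExact_quot B) _ α
    (by omega : 1 + (k + 1) = k + 2) (h.elim _ _)
  rw [Abelian.Ext.eq_zero_of_projective β, Abelian.Ext.comp_zero]

lemma ExtVan.quot {Y : Type} [AddCommGroup Y] [Module A Y] [Module.Projective A Y]
    (B : Submodule A Y) {k : ℕ} (h : ExtVan A N (k + 1) B) : ExtVan A N (k + 2) (Y ⧸ B) := by
  refine subsingleton_of_forall_eq 0 fun α => ?_
  obtain ⟨β, rfl⟩ := Abelian.Ext.contravariant_sequence_exact₃ (shortExact_quot B) _ α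
    (Abelian.Ext.eq_zero_of_projective _) (by omega : 1 + (k + 1) = k + 2)
  rw [h.elim β 0, Abelian.Ext.comp_zero]

lemma ExtVan.eq_zero {X : Type} [AddCommGroup X] [Module A X] (h : ExtVan A N 0 X)
    (f : X →ₗ[A] N) : f = 0 := by
  have := (Abelian.Ext.homEquiv₀ (X := ModuleCat.of A X) (Y := ModuleCat.of A N)).symm.injective
    (h.elim (Abelian.Ext.homEquiv₀.symm (ModuleCat.ofHom f)) (Abelian.Ext.homEquiv₀.symm 0))
  simpa using congrArg ModuleCat.Hom.hom this

lemma ExtVan.exists_extend {Y : Type} [AddCommGroup Y] [Module A Y] (B : Submodule A Y)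
    (h : ExtVan A N 1 (Y ⧸ B)) (f : B →ₗ[A] N) : ∃ g : Y →ₗ[A] N, g ∘ₗ B.subtype = f := by
  obtain ⟨β, hβ⟩ := Abelian.Ext.contravariant_sequence_exact₁ (shortExact_quot B) _
    (Abelian.Ext.homEquiv₀.symm (ModuleCat.ofHom f)) (rfl : 1 + 0 = 1) (h.elim _ _)
  obtain ⟨g, rfl⟩ := Abelian.Ext.homEquiv₀.symm.surjective β
  refine ⟨g.hom, ?_⟩
  have h1 : Abelian.Ext.mk₀ (ModuleCat.ofHom B.subtype ≫ g) =
      Abelian.Ext.mk₀ (ModuleCat.ofHom f) := by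
    rw [← Abelian.Ext.mk₀_comp_mk₀]; exact hβ
  exact congrArg ModuleCat.Hom.hom (Abelian.Ext.homEquiv₀.symm.injective h1)

/-- If `Ext^1(coker χ, N) = 0`, a functional vanishing on `ker χ` factors through `χ`. -/
lemma ExtVan.exists_factor {X Y : Type} [AddCommGroup X] [Module A X] [AddCommGroup Y]
    [Module A Y] (χ : X →ₗ[A] Y) (h : ExtVan A N 1 (Y ⧸ LinearMap.range χ)) (f : X →ₗ[A] N)
    (hf : LinearMap.ker χ ≤ LinearMap.ker f) : ∃ g : Y →ₗ[A] N, g ∘ₗ χ = f := by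
  obtain ⟨g, hg⟩ := h.exists_extend _
    ((LinearMap.ker χ).liftQ f hf ∘ₗ χ.quotKerEquivRange.symm.toLinearMap)
  refine ⟨g, ?_⟩
  ext x
  have := LinearMap.congr_fun hg ⟨χ x, x, rfl⟩
  have h2 : χ.quotKerEquivRange.symm ⟨χ x, x, rfl⟩ = (LinearMap.ker χ).mkQ x := by
    rw [LinearEquiv.symm_apply_eq]; rfl
  simp only [LinearMap.comp_apply, Submodule.subtype_apply, LinearEquiv.coe_coe, h2] at this
  simpa using this

/-- Dimension shifting along an exact sequence `U → X → Y` with `Y` projective. -/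
lemma ExtVan.shift {U X Y : Type} [AddCommGroup U] [Module A U] [AddCommGroup X] [Module A X]
    [AddCommGroup Y] [Module A Y] [Module.Projective A Y] (ψ : U →ₗ[A] X) (χ : X →ₗ[A] Y)
    (hex : LinearMap.range ψ = LinearMap.ker χ) {k : ℕ}
    (h : ExtVan A N (k + 2) (Y ⧸ LinearMap.range χ)) :
    ExtVan A N (k + 1) (X ⧸ LinearMap.range ψ) :=
  h.of_quot.congr (χ.quotKerEquivRange.symm.trans (Submodule.quotEquivOfEq _ _ hex.symm))

/-- If `Ext^{k+1}(-, N)` vanishes identically, so does `Ext^{k+2}(-, N)`. -/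
lemma ExtVan.succ {k : ℕ}
    (h : ∀ (X : Type) [AddCommGroup X] [Module A X], ExtVan A N (k + 1) X)
    (X : Type) [AddCommGroup X] [Module A X] : ExtVan A N (k + 2) X := by
  let p : (X →₀ A) →ₗ[A] X := Finsupp.linearCombination A id
  have hp : Function.Surjective p := fun x => ⟨Finsupp.single x 1, by simp [p]⟩
  exact (ExtVan.quot (LinearMap.ker p) (h _)).congr (p.quotKerEquivOfSurjective hp)

end ExtVan

/-! ### Duality for finitely generated projective modules -/

section Duality

variable {Λ : Type} [Ring Λ] (P : Type) [AddCommGroup P] [Module Λ P]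

/-- The dual basis lemma for a finitely generated projective module. -/
lemma exists_dual_basis [Module.Finite Λ P] [Module.Projective Λ P] :
    ∃ (n : ℕ) (e : Fin n → P) (φ : Fin n → (P →ₗ[Λ] Λ)),
    ∀ p, ∑ i, φ i p • e i = p := by
  obtain ⟨n, f, g, -, -, hfg⟩ := Module.Finite.exists_comp_eq_id_of_projective Λ P
  refine ⟨n, fun i => f (Pi.single i 1), fun i => LinearMap.proj i ∘ₗ g, fun p => ?_⟩
  conv_rhs => rw [← LinearMap.id_apply (R := Λ) p, ← hfg, LinearMap.comp_apply,
    ← Finset.univ_sum_single (g p), map_sum]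
  refine Finset.sum_congr rfl fun i _ => ?_
  rw [← map_smul, ← Pi.single_smul, smul_eq_mul, mul_one]
  rfl

lemma dual_eq_sum {n : ℕ} {e : Fin n → P} {φ : Fin n → (P →ₗ[Λ] Λ)}
    (h : ∀ p, ∑ i, φ i p • e i = p) (f : P →ₗ[Λ] Λ) :
    ∑ i, MulOpposite.op (f (e i)) • φ i = f := by
  ext p
  conv_rhs => rw [← h p]
  simp [LinearMap.sum_apply]

instance projective_dual [Module.Finite Λ P] [Module.Projective Λ P] :
    Module.Projective Λᵐᵒᵖ (P →ₗ[Λ] Λ) := by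
  obtain ⟨n, e, φ, h⟩ := exists_dual_basis (Λ := Λ) P
  let i : (P →ₗ[Λ] Λ) →ₗ[Λᵐᵒᵖ] (Fin n → Λᵐᵒᵖ) :=
    { toFun := fun f k => MulOpposite.op (f (e k))
      map_add' := fun f g => by ext; simp
      map_smul' := fun a f => by ext; simp }
  let s : (Fin n → Λᵐᵒᵖ) →ₗ[Λᵐᵒᵖ] (P →ₗ[Λ] Λ) := Fintype.linearCombination Λᵐᵒᵖ φ
  refine Module.Projective.of_split i s ?_
  ext1 f
  simpa [i, s, Fintype.linearCombination_apply] using dual_eq_sum P h f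

lemma evalL_bijective [Module.Finite Λ P] [Module.Projective Λ P] :
    Function.Bijective (evalL Λ P) := by
  obtain ⟨n, e, φ, h⟩ := exists_dual_basis (Λ := Λ) P
  constructor
  · refine (injective_iff_map_eq_zero _).2 fun p hp => ?_
    rw [← h p]
    refine Finset.sum_eq_zero fun i _ => ?_
    have : φ i p = 0 := LinearMap.congr_fun hp (φ i)
    rw [this, zero_smul]
  · intro F
    refine ⟨∑ i, F (φ i) • e i, ?_⟩
    ext f
    change f (∑ i, F (φ i) • e i) = F f
    conv_rhs => rw [← dual_eq_sum P h f, map_sum]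
    rw [map_sum]
    refine Finset.sum_congr rfl fun i _ => ?_
    rw [map_smul, map_smul]
    rfl

end Duality

/-! ### The mapping cone, one degree at a time -/

section Cone

variable {Γ : Type} [Ring Γ] (N : Type) [AddCommGroup N] [Module Γ N]

/-- One degree of the mapping cone of a chain map from `S' → S → B` to `A → D → D'` whose
component in this degree is `c : S → D`. The cone differential is
`(x, y) ↦ (a x + c y, b y) : A × S → D × B`; `res` says that it is continued exactly by a map `χ`
to a projective module `Y`, that `coker χ` has no `Ext^{k+1}` and no `Ext^{k+2}` into `N`, and
that a functional on `Y` restricts along `χ` to one on `D` factoring through `δ`. The fields `lift`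
and `ker` are what the next component `S' → A` and exactness of the next cone need; `comm` says
that the square on the right commutes for some `B → D'`. -/
structure ConeStage {A D D' S' S B : Type} [AddCommGroup A] [AddCommGroup D] [AddCommGroup D']
    [AddCommGroup S'] [AddCommGroup S] [AddCommGroup B] [Module Γ A] [Module Γ D] [Module Γ D']
    [Module Γ S'] [Module Γ S] [Module Γ B] (k : ℕ) (a : A →ₗ[Γ] D) (δ : D →ₗ[Γ] D')
    (s : S' →ₗ[Γ] S) (b : S →ₗ[Γ] B) (c : S →ₗ[Γ] D) : Prop where
  lift : ∀ y, c (s y) ∈ LinearMap.range a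
  ker : ∀ x y, a x + c y = 0 → b y = 0 → y ∈ LinearMap.range s
  comm : ∃ c₀ : B →ₗ[Γ] D', δ ∘ₗ c = c₀ ∘ₗ b
  res : ∃ (Y : Type) (_ : AddCommGroup Y) (_ : Module Γ Y) (_ : Module.Projective Γ Y)
    (χ : D × B →ₗ[Γ] Y),
    LinearMap.range ((a.coprod c).prod (b ∘ₗ LinearMap.snd Γ A S)) = LinearMap.ker χ ∧
    ExtVan Γ N (k + 1) (Y ⧸ LinearMap.range χ) ∧ ExtVan Γ N (k + 2) (Y ⧸ LinearMap.range χ) ∧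
    ∀ q : Y →ₗ[Γ] N, ∃ q' : D' →ₗ[Γ] N, q ∘ₗ χ ∘ₗ LinearMap.inl Γ D B = q' ∘ₗ δ

variable {N}
variable {A' A D D' S'' S' S B : Type} [AddCommGroup A'] [AddCommGroup A] [AddCommGroup D]
  [AddCommGroup D'] [AddCommGroup S''] [AddCommGroup S'] [AddCommGroup S] [AddCommGroup B]
  [Module Γ A'] [Module Γ A] [Module Γ D] [Module Γ D'] [Module Γ S''] [Module Γ S'] [Module Γ S]
  [Module Γ B] {k : ℕ} {a : A →ₗ[Γ] D} {δ : D →ₗ[Γ] D'} {s : S' →ₗ[Γ] S} {b : S →ₗ[Γ] B}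
  {c : S →ₗ[Γ] D}

/-- Passing to the next degree: the chain map lifts because `S'` is projective, the cone stays
exact, and the vanishing of Ext shifts down by one degree. -/
lemma ConeStage.step [Module.Projective Γ D] [Module.Projective Γ B] [Module.Projective Γ S']
    {a' : A' →ₗ[Γ] A} {s' : S'' →ₗ[Γ] S'} (ha : LinearMap.range a' = LinearMap.ker a)
    (hs : LinearMap.range s' = LinearMap.ker s) (hbs : ∀ y, b (s y) = 0)
    (h : ConeStage N (k + 1) a δ s b c) :
    ∃ c' : S' →ₗ[Γ] A, ConeStage N k a' a s' s c' := by
  obtain ⟨c', hc'⟩ := Module.projective_lifting_property a.rangeRestrict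
    (-((c ∘ₗ s).codRestrict (LinearMap.range a) h.lift)) a.surjective_rangeRestrict
  have hac : ∀ y, a (c' y) = -c (s y) := fun y =>
    congrArg Subtype.val (LinearMap.congr_fun hc' y)
  obtain ⟨Y, _, _, _, χ, hχ, h1, h2, -⟩ := h.res
  refine ⟨c', ?_, ?_, ⟨-c, ?_⟩, D × B, inferInstance, inferInstance, inferInstance,
    (a.coprod c).prod (b ∘ₗ LinearMap.snd Γ A S), ?_, ExtVan.shift _ χ hχ h1,
    ExtVan.shift _ χ hχ h2, fun q => ⟨q ∘ₗ LinearMap.inl Γ D B, ?_⟩⟩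
  · intro y
    rw [ha, LinearMap.mem_ker, hac]
    have : s (s' y) = 0 := LinearMap.mem_ker.1 (hs ▸ LinearMap.mem_range_self s' y)
    rw [this, map_zero, neg_zero]
  · intro x y _ hy
    rw [hs]; exact hy
  · ext y; simp [hac]
  · ext ⟨x, y⟩
    constructor
    · rintro ⟨⟨x', y'⟩, h'⟩
      obtain ⟨rfl, rfl⟩ : a' x' + c' y' = x ∧ s y' = y := by simpa [Prod.ext_iff] using h'
      have : a (a' x') = 0 := LinearMap.mem_ker.1 (ha ▸ LinearMap.mem_range_self a' x')
      simp [hac, hbs, this]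
    · intro h'
      obtain ⟨hx, hy⟩ : a x + c y = 0 ∧ b y = 0 := by simpa [Prod.ext_iff] using h'
      obtain ⟨y', rfl⟩ := h.ker x y hx hy
      have : x - c' y' ∈ LinearMap.range a' := by
        rw [ha, LinearMap.mem_ker, map_sub, hac, sub_neg_eq_add, hx]
      obtain ⟨x', hx'⟩ := this
      exact ⟨(x', y'), by simp [hx']⟩
  · ext x; simp

/-- At the last degree (`A = 0`), a functional killing the boundaries comes from `D`
up to coboundaries. -/
lemma ConeStage.exists_functional [Subsingleton A] (h : ConeStage N 0 a δ s b c)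
    (f : S →ₗ[Γ] N) (hf : ∀ y, f (s y) = 0) :
    ∃ (p : D →ₗ[Γ] N) (g : B →ₗ[Γ] N), f = p ∘ₗ c + g ∘ₗ b := by
  obtain ⟨Y, _, _, _, χ, hχ, -, h2, -⟩ := h.res
  obtain ⟨g, hg⟩ := ExtVan.exists_factor _ (ExtVan.shift _ χ hχ h2)
    (f ∘ₗ LinearMap.snd Γ A S) (by
      rintro ⟨x, y⟩ h'
      obtain ⟨hx, hy⟩ : a x + c y = 0 ∧ b y = 0 := by simpa [Prod.ext_iff] using h'
      obtain ⟨y', rfl⟩ := h.ker x y hx hy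
      simp [hf])
  refine ⟨g ∘ₗ LinearMap.inl Γ D B, g ∘ₗ LinearMap.inr Γ D B, ?_⟩
  ext y
  have : g (a 0 + c y, b y) = f y := LinearMap.congr_fun hg (0, y)
  simp [← this, ← map_add]

/-- At the last degree (`A = 0`), a functional on `D` inducing a coboundary on `S`
comes from `D'`. -/
lemma ConeStage.exists_factor [Subsingleton A] (h : ConeStage N 0 a δ s b c)
    (p : D →ₗ[Γ] N) (g : B →ₗ[Γ] N) (hp : p ∘ₗ c = g ∘ₗ b) :
    ∃ q : D' →ₗ[Γ] N, p = q ∘ₗ δ := by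
  obtain ⟨Y, _, _, _, χ, hχ, h1, -, h3⟩ := h.res
  obtain ⟨q, hq⟩ := ExtVan.exists_factor χ h1 (p.coprod (-g)) (by
    rw [← hχ]
    rintro _ ⟨⟨x, y⟩, rfl⟩
    have := LinearMap.congr_fun hp y
    simp only [LinearMap.comp_apply] at this
    simp [Subsingleton.elim x 0, this])
  obtain ⟨q', hq'⟩ := h3 q
  refine ⟨q', ?_⟩
  rw [← hq', ← LinearMap.comp_assoc, hq, LinearMap.coprod_inl]

end Cone

/-! ### Extending complexes by zero -/

section Shift

variable {Γ : Type} [Ring Γ]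

/-- The family `0, D 0, D 1, …`, a sequence of modules moved up by one degree. -/
def Shifted (D : ℕ → Type) : ℕ → Type
  | 0 => PUnit
  | n + 1 => D n

variable {D : ℕ → Type} [∀ n, AddCommGroup (D n)] [∀ n, Module Γ (D n)]

instance : ∀ n, AddCommGroup (Shifted D n)
  | 0 => inferInstanceAs (AddCommGroup PUnit)
  | n + 1 => inferInstanceAs (AddCommGroup (D n))

instance : ∀ n, Module Γ (Shifted D n)
  | 0 => inferInstanceAs (Module Γ PUnit)
  | n + 1 => inferInstanceAs (Module Γ (D n))

instance [∀ n, Module.Projective Γ (D n)] : ∀ n, Module.Projective Γ (Shifted D n)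
  | 0 => inferInstanceAs (Module.Projective Γ PUnit)
  | n + 1 => inferInstanceAs (Module.Projective Γ (D n))

instance : Subsingleton (Shifted D 0) := inferInstanceAs (Subsingleton PUnit)

/-- The differential arriving at `D n` in a cochain complex, which is zero for `n = 0`. -/
def inMap (δ : ∀ n, D n →ₗ[Γ] D (n + 1)) : ∀ n, Shifted D n →ₗ[Γ] D n
  | 0 => 0
  | n + 1 => δ n

/-- The differential leaving `D n` in a chain complex, which is zero for `n = 0`. -/
def outMap (d : ∀ n, D (n + 1) →ₗ[Γ] D n) : ∀ n, D n →ₗ[Γ] Shifted D n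
  | 0 => 0
  | n + 1 => d n

lemma outMap_d (d : ∀ n, D (n + 1) →ₗ[Γ] D n)
    (hd : ∀ n, LinearMap.range (d (n + 1)) = LinearMap.ker (d n)) (n : ℕ) (y : D (n + 1)) :
    outMap d n (d n y) = 0 := by
  cases n with
  | zero => rfl
  | succ n => exact LinearMap.mem_ker.1 (hd n ▸ LinearMap.mem_range_self _ y)

variable {N : Type} [AddCommGroup N] [Module Γ N] {S : ℕ → Type} [∀ n, AddCommGroup (S n)]
  [∀ n, Module Γ (S n)]

/-- Iterating `ConeStage.step` along a cochain complex `D` that is exact in degrees below `t`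
and a projective resolution `S`. -/
lemma exists_coneStage [∀ n, Module.Projective Γ (D n)] [∀ n, Module.Projective Γ (S n)]
    (δ : ∀ n, D n →ₗ[Γ] D (n + 1)) (d : ∀ n, S (n + 1) →ₗ[Γ] S n)
    (hd : ∀ n, LinearMap.range (d (n + 1)) = LinearMap.ker (d n)) (t : ℕ)
    (hδ : ∀ j < t, LinearMap.range (inMap δ j) = LinearMap.ker (δ j))
    (h0 : ∃ c, ConeStage N t (inMap δ t) (δ t) (d 0) (outMap d 0) c) (i : ℕ) :
    ∀ j, i + j = t → ∃ c, ConeStage N j (inMap δ j) (δ j) (d i) (outMap d i) c := by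
  induction i with
  | zero =>
    intro j hj
    obtain rfl : j = t := by omega
    exact h0
  | succ i ih =>
    intro j hj
    obtain ⟨c, hc⟩ := ih (j + 1) (by omega)
    exact ConeStage.step (hδ j (by omega)) (hd i) (outMap_d d hd i) hc

end Shift

/-! ### The biduality isomorphism -/

section Main

variable {Λ : Type} [Ring Λ] {M : Type} [AddCommGroup M] [Module Λ M]

/-- The dual complex of a resolution is exact wherever the corresponding Ext of `M` vanishes. -/
lemma FGProjRes.dual_exact (R : FGProjRes Λ M) (j : ℕ) (h : ExtVan Λ Λ j M) :
    LinearMap.range (inMap (fun n => dualMap (R.d n)) j) = LinearMap.ker (dualMap (R.d j)) := by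
  have key : ∀ i k, ExtVan Λ Λ (i + k + 1) M →
      ExtVan Λ Λ (k + 1) (R.P i ⧸ LinearMap.range (R.d i)) := by
    intro i
    induction i with
    | zero =>
      intro k h
      rw [zero_add] at h
      exact h.congr ((R.π.quotKerEquivOfSurjective R.surj).symm.trans
        (Submodule.quotEquivOfEq _ _ R.exact0.symm))
    | succ i ih =>
      intro k h
      refine ExtVan.shift _ _ (R.exact i) (ih (k + 1) ?_)
      rwa [show i + (k + 1) + 1 = i + 1 + k + 1 by omega]
  cases j with
  | zero =>
    ext f
    refine ⟨?_, fun hf => ?_⟩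
    · rintro ⟨x, rfl⟩
      exact zero_mem _
    · have hle : LinearMap.ker R.π ≤ LinearMap.ker f := by
        rw [← R.exact0]
        rintro _ ⟨y, rfl⟩
        exact LinearMap.congr_fun hf y
      have h1 := h.eq_zero ((LinearMap.ker R.π).liftQ f hle ∘ₗ
        (R.π.quotKerEquivOfSurjective R.surj).symm.toLinearMap)
      refine ⟨0, ?_⟩
      rw [map_zero]
      ext x
      have h2 := LinearMap.congr_fun h1 (R.π x)
      have h3 : (R.π.quotKerEquivOfSurjective R.surj).symm (R.π x) =
          (LinearMap.ker R.π).mkQ x := by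
        rw [LinearEquiv.symm_apply_eq]; rfl
      simp only [LinearMap.comp_apply, LinearEquiv.coe_coe, h3] at h2
      simpa using h2.symm
  | succ j =>
    ext f
    constructor
    · rintro ⟨g, rfl⟩
      ext y
      have : R.d j (R.d (j + 1) y) = 0 :=
        LinearMap.mem_ker.1 (R.exact j ▸ LinearMap.mem_range_self _ y)
      change (show R.P j →ₗ[Λ] Λ from g) (R.d j (R.d (j + 1) y)) = 0
      rw [this, map_zero]
    · intro hf
      refine (key j 0 (by simpa using h)).exists_factor (R.d j) f ?_
      rw [← R.exact]
      rintro _ ⟨y, rfl⟩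
      exact LinearMap.congr_fun hf y

lemma FGProjRes.mem_extBdry (R : FGProjRes Λ M) (t : ℕ) (x : R.extSub t) :
    x ∈ R.extBdry t ↔ x.1 ∈ LinearMap.range (inMap (fun n => dualMap (R.d n)) t) := by
  cases t with
  | zero =>
    constructor
    · intro h
      rw [show x = 0 from h]
      exact zero_mem _
    · rintro ⟨y, hy⟩
      exact Subtype.ext hy.symm
  | succ t => rfl

lemma FGProjResR.mem_extBdry {E : Type} [AddCommGroup E] [Module Λᵐᵒᵖ E] (S : FGProjResR Λ E)
    (t : ℕ) (x : S.extSub t) :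
    x ∈ S.extBdry t ↔ ∃ g : Shifted S.P t →ₗ[Λᵐᵒᵖ] Λ, x.1 = g ∘ₗ outMap S.d t := by
  cases t with
  | zero =>
    constructor
    · intro h
      exact ⟨0, by rw [show x = 0 from h]; rfl⟩
    · rintro ⟨g, hg⟩
      refine Subtype.ext (hg.trans ?_)
      ext y
      exact map_zero g
  | succ t => exact ⟨fun ⟨g, hg⟩ => ⟨g, hg.symm⟩, fun ⟨g, hg⟩ => ⟨g, hg.symm⟩⟩

lemma FGProjRes.inMap_comp (R : FGProjRes Λ M) (t : ℕ)
    (x : Shifted (fun n => R.P n →ₗ[Λ] Λ) t) :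
    dualMap (R.d t) (inMap (fun n => dualMap (R.d n)) t x) = 0 := by
  cases t with
  | zero => exact map_zero _
  | succ t =>
    ext y
    have : R.d t (R.d (t + 1) y) = 0 :=
      LinearMap.mem_ker.1 (R.exact t ▸ LinearMap.mem_range_self _ y)
    change (show R.P t →ₗ[Λ] Λ from x) (R.d t (R.d (t + 1) y)) = 0
    rw [this, map_zero]

lemma exists_quot {A V : Type} [Ring A] [AddCommGroup V] [Module A V] (Z : Submodule A V)
    (B : Submodule A Z) :
    ∃ r : Z →ₗ[A] Z ⧸ B, Function.Surjective r ∧ ∀ f, r f = 0 ↔ f ∈ B :=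
  ⟨B.mkQ, B.mkQ_surjective, fun _ => Submodule.Quotient.mk_eq_zero B⟩

/-- The cone in its initial degree, for a complex `A → D → D'` with cohomology `Z/Bd` and a
presentation `S' → S → Z/Bd`: a lift `c : S → Z ⊆ D` of the presentation makes the cone map
onto `Z`, so `χ` can be taken to be `δ`. -/
lemma exists_coneStage_zero {Γ : Type} [Ring Γ] {N A D D' S' S B : Type} [AddCommGroup N]
    [AddCommGroup A] [AddCommGroup D] [AddCommGroup D'] [AddCommGroup S'] [AddCommGroup S]
    [AddCommGroup B] [Module Γ N] [Module Γ A] [Module Γ D] [Module Γ D'] [Module Γ S']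
    [Module Γ S] [Module Γ B] [Module.Projective Γ D'] [Module.Projective Γ S] [Subsingleton B]
    {k : ℕ} (hid : ∀ (X : Type) [AddCommGroup X] [Module Γ X], ExtVan Γ N (k + 1) X)
    {a : A →ₗ[Γ] D} {δ : D →ₗ[Γ] D'} (ha : ∀ x, δ (a x) = 0)
    (Bd : Submodule Γ (LinearMap.ker δ)) (hBd : ∀ z, z ∈ Bd ↔ z.1 ∈ LinearMap.range a)
    {s : S' →ₗ[Γ] S} {π : S →ₗ[Γ] (LinearMap.ker δ ⧸ Bd)} (hπ : Function.Surjective π)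
    (hs : LinearMap.range s = LinearMap.ker π) (b : S →ₗ[Γ] B) :
    ∃ c, ConeStage N k a δ s b c := by
  obtain ⟨l, hl⟩ := Module.projective_lifting_property Bd.mkQ π Bd.mkQ_surjective
  have hl' : ∀ y, Bd.mkQ (l y) = π y := fun y => LinearMap.congr_fun hl y
  have hlift : ∀ z : LinearMap.ker δ, Bd.mkQ z = 0 ↔ z.1 ∈ LinearMap.range a := fun z =>
    (Submodule.Quotient.mk_eq_zero Bd).trans (hBd z)
  refine ⟨(LinearMap.ker δ).subtype ∘ₗ l, ?_, ?_, ⟨0, ?_⟩, D', inferInstance,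
    inferInstance, inferInstance, δ ∘ₗ LinearMap.fst _ _ _, ?_, hid _,
    ExtVan.succ hid _, fun q => ⟨q, rfl⟩⟩
  · intro y
    refine (hlift _).1 ?_
    rw [hl', ← LinearMap.mem_ker, ← hs]
    exact LinearMap.mem_range_self _ y
  · intro x y hxy _
    rw [hs, LinearMap.mem_ker, ← hl', hlift]
    exact ⟨-x, by rw [map_neg]; exact neg_eq_of_add_eq_zero_right hxy⟩
  · ext1 y
    exact (l y).2
  · ext ⟨z, w⟩
    constructor
    · rintro ⟨⟨x, y⟩, h⟩
      have hz : a x + (l y).1 = z := congrArg Prod.fst h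
      have hly : δ (l y).1 = 0 := (l y).2
      change δ z = 0
      rw [← hz, map_add, ha, hly, add_zero]
    · intro h
      let z' : LinearMap.ker δ := ⟨z, h⟩
      obtain ⟨y, hy⟩ := hπ (Bd.mkQ z')
      obtain ⟨x, hx⟩ := (hlift (z' - l y)).1 (by rw [map_sub, hl', hy, sub_self])
      refine ⟨(x, y), Prod.ext ?_ (Subsingleton.elim _ _)⟩
      change a x + (l y).1 = z
      rw [hx]
      exact sub_add_cancel z (l y).1

/-- Biduality, given the last degree of the cone. The isomorphism is induced by
`P_0 ≅ P_0^{**} → Hom(S_t, Λ)`, precomposition with `c : S_t → P_0^*`; here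
`S' → S → B` is the resolution near degree `t`, and `r` makes `E` the cohomology of its dual. -/
lemma biduality {P₁ P₀ A S' S B : Type} [AddCommGroup P₁] [AddCommGroup P₀] [AddCommGroup A]
    [AddCommGroup S'] [AddCommGroup S] [AddCommGroup B] [Module Λ P₁] [Module Λ P₀]
    [Module Λᵐᵒᵖ A] [Module Λᵐᵒᵖ S'] [Module Λᵐᵒᵖ S] [Module Λᵐᵒᵖ B]
    [Module.Finite Λ P₁] [Module.Projective Λ P₁] [Module.Finite Λ P₀] [Module.Projective Λ P₀]
    [Subsingleton A] {d : P₁ →ₗ[Λ] P₀} {π : P₀ →ₗ[Λ] M} (hπ : Function.Surjective π)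
    (hd : LinearMap.range d = LinearMap.ker π) {a : A →ₗ[Λᵐᵒᵖ] (P₀ →ₗ[Λ] Λ)}
    {s : S' →ₗ[Λᵐᵒᵖ] S} {b : S →ₗ[Λᵐᵒᵖ] B} {c : S →ₗ[Λᵐᵒᵖ] (P₀ →ₗ[Λ] Λ)}
    (hc : ConeStage Λ 0 a (dualMap d) s b c)
    {E : Type} [AddCommGroup E] [Module Λ E] (r : LinearMap.ker (dualMapR s) →ₗ[Λ] E)
    (hr : Function.Surjective r)
    (hr₀ : ∀ f, r f = 0 ↔ ∃ g : B →ₗ[Λᵐᵒᵖ] Λ, f.1 = g ∘ₗ b) :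
    Nonempty (M ≃ₗ[Λ] E) := by
  have hcs : ∀ y, c (s y) = 0 := by
    intro y
    obtain ⟨x, hx⟩ := hc.lift y
    rw [← hx, Subsingleton.elim x 0, map_zero]
  let φ₀ : P₀ →ₗ[Λ] LinearMap.ker (dualMapR s) := (dualMapR c ∘ₗ evalL Λ P₀).codRestrict _ (by
    intro p
    ext y
    change c (s y) p = 0
    rw [hcs]; rfl)
  let φ : P₀ →ₗ[Λ] E := r ∘ₗ φ₀
  have hφ : ∀ p, φ p = 0 ↔ ∃ g : B →ₗ[Λᵐᵒᵖ] Λ, evalL Λ P₀ p ∘ₗ c = g ∘ₗ b := fun p =>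
    hr₀ (φ₀ p)
  have hsurj : Function.Surjective φ := by
    intro e
    obtain ⟨f, rfl⟩ := hr e
    obtain ⟨F, g, hFg⟩ := hc.exists_functional f.1 fun y => LinearMap.congr_fun f.2 y
    obtain ⟨p, rfl⟩ := (evalL_bijective P₀).2 F
    refine ⟨p, sub_eq_zero.1 ((map_sub r _ _).symm.trans ((hr₀ _).2 ⟨-g, ?_⟩))⟩
    change evalL Λ P₀ p ∘ₗ c - f.1 = _
    rw [hFg, LinearMap.neg_comp]
    abel
  have hker : LinearMap.ker π = LinearMap.ker φ := by
    rw [← hd]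
    ext p
    rw [LinearMap.mem_ker, hφ]
    constructor
    · rintro ⟨p₁, rfl⟩
      obtain ⟨c₀, hc₀⟩ := hc.comm
      refine ⟨evalL Λ P₁ p₁ ∘ₗ c₀, ?_⟩
      rw [LinearMap.comp_assoc, ← hc₀]
      rfl
    · rintro ⟨g, hg⟩
      obtain ⟨q, hq⟩ := hc.exists_factor _ g hg
      obtain ⟨p₁, rfl⟩ := (evalL_bijective P₁).2 q
      exact ⟨p₁, (evalL_bijective P₀).1 hq.symm⟩
  exact ⟨(π.quotKerEquivOfSurjective hπ).symm.trans
    ((Submodule.quotEquivOfEq _ _ hker).trans (φ.quotKerEquivOfSurjective hsurj))⟩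

end Main


/-- Over a left quasi `∞`-Gorenstein ring with `id_{Λᵒᵖ} Λ = t < ∞`, if `grade M = t`
then `M ≅ Ext^t_{Λᵒᵖ}(Ext^t_Λ(M, Λ), Λ)`. -/
theorem stmt_12 (Λ : Type) [Ring Λ] [IsNoetherianRing Λ] [IsNoetherianRing Λᵐᵒᵖ]
    (hQ : LeftQuasiInfGorenstein Λ) (t : ℕ)
    (hid : idLambdaOpLE Λ t)
    (hid' : ∀ s < t, ¬ idLambdaOpLE Λ s)
    (M : Type) [AddCommGroup M] [Module Λ M] [Module.Finite Λ M]
    (hlow : ∀ j < t, Subsingleton (extGrp Λ j (ModuleCat.of Λ M) (ModuleCat.of Λ Λ)))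
    (hne : Nontrivial (extGrp Λ t (ModuleCat.of Λ M) (ModuleCat.of Λ Λ))) :
    ∀ (R : FGProjRes Λ M) (S : FGProjResR Λ (R.extQ t)),
      Nonempty (M ≃ₗ[Λ] S.extQ t) := by
  intro R S
  have hid₁ : ∀ (X : Type) [AddCommGroup X] [Module Λᵐᵒᵖ X], ExtVan Λᵐᵒᵖ Λ (t + 1) X :=
    fun X _ _ => extVan_of_extGrp (t + 1) X (hid (ModuleCat.of Λᵐᵒᵖ X))
  obtain ⟨c, hc⟩ := exists_coneStage (fun n => dualMap (R.d n)) S.d S.exact t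
    (fun j hj => R.dual_exact j (extVan_of_extGrp j M (hlow j hj)))
    (exists_coneStage_zero hid₁ (R.inMap_comp t) (R.extBdry t) (R.mem_extBdry t) S.surj S.exact0 _)
    t 0 (add_zero t)
  obtain ⟨r, hr, hr₀⟩ : ∃ r : S.extSub t →ₗ[Λ] S.extQ t, Function.Surjective r ∧
      ∀ f, r f = 0 ↔ f ∈ S.extBdry t := exists_quot (S.extSub t) (S.extBdry t)
  exact biduality R.surj R.exact0 hc r hr fun f => (hr₀ f).trans (S.mem_extBdry t f)
end

section
/- Let Λ be a left and right Noetherian ring and 0 → M₁ → M₂ → M₃ → 0 an exact sequence of finitely generated left Λ-modules. There is an induced exact sequence 0 → M₃* → M₂* → M₁* → Tr M₃ → Tr M₂ → Tr M₁ → 0 of right Λ-modules, for suitable choices of the transposes. -/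
/-!
The proof is the horseshoe lemma followed by an explicit connecting map. Let
`A₁ → A₀ → M₁` and `C₁ → C₀ → M₃` be presentations with maps `g₁, π₁` and `g₃, π₃`. Lift `π₃`
through `p` to `σ : C₀ → M₂`. Since `σ g₃` lands in `ker p = range ι` and `C₁` is projective, there
is `τ : C₁ → A₀` with `ι π₁ τ + σ g₃ = 0`. Then `A₁ × C₁ → A₀ × C₀ → M₂`, with maps
`(a, c) ↦ (g₁ a + τ c, g₃ c)` and `(a, c) ↦ ι π₁ a + σ c`, is a presentation of `M₂`
(`Presentation.horseshoe`).

The maps `Tr M₃ → Tr M₂ → Tr M₁` are induced by the duals of the projection `A₁ × C₁ → C₁` and the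
inclusion `A₁ → A₁ × C₁`, and the connecting map `M₁* → Tr M₃` sends `f` to the class of `f π₁ τ`.
With these formulas each exactness claim is a computation with the components of functionals on the
two products, together with the fact that a functional on the degree zero term `P₀` which
vanishes on the relations descends to the presented module (`Presentation.exists_factor`).
-/


open CategoryTheory

theorem map_prod_split {Λ A C : Type} [Ring Λ] [AddCommGroup A] [Module Λ A] [AddCommGroup C]
    [Module Λ C] (f : A × C →ₗ[Λ] Λ) (a : A) (c : C) : f (a, c) = f (a, 0) + f (0, c) := by
  rw [← map_add, Prod.mk_add_mk, add_zero, zero_add]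

section Presentation

variable {Λ : Type} [Ring Λ] {M : Type} [AddCommGroup M] [Module Λ M]

theorem Presentation.π_g (pr : Presentation Λ M) (x : pr.P₁) : pr.π (pr.g x) = 0 :=
  LinearMap.mem_ker.1 (pr.exact ▸ LinearMap.mem_range_self pr.g x)

theorem exists_presentation [IsNoetherianRing Λ] [Module.Finite Λ M] :
    Nonempty (Presentation Λ M) := by
  obtain ⟨n, π, hπ⟩ := Module.Finite.exists_fin' Λ M
  obtain ⟨m, g, hg⟩ := Module.Finite.exists_fin' Λ (LinearMap.ker π)
  exact ⟨{
    P₁ := Fin m → Λ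
    P₀ := Fin n → Λ
    g := (LinearMap.ker π).subtype ∘ₗ g
    π := π
    surj := hπ
    exact := by
      rw [LinearMap.range_comp_of_range_eq_top _ (LinearMap.range_eq_top.2 hg),
        Submodule.range_subtype] }⟩

/-- A functional on `P₀` vanishing on the relations `g P₁` factors through `M`. -/
theorem Presentation.exists_factor (pr : Presentation Λ M) (u : pr.P₀ →ₗ[Λ] Λ)
    (hu : ∀ x, u (pr.g x) = 0) : ∃ f : M →ₗ[Λ] Λ, ∀ x, f (pr.π x) = u x := by
  have hk : LinearMap.ker pr.π ≤ LinearMap.ker u := by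
    rw [← pr.exact]
    rintro _ ⟨x, rfl⟩
    exact hu x
  refine ⟨(LinearMap.ker pr.π).liftQ u hk ∘ₗ
    (pr.π.quotKerEquivOfSurjective pr.surj).symm.toLinearMap, fun x => ?_⟩
  have : (pr.π.quotKerEquivOfSurjective pr.surj).symm (pr.π x) = Submodule.Quotient.mk x := by
    rw [LinearEquiv.symm_apply_eq]
    rfl
  simp [this]

end Presentation

/-- Horseshoe lemma: a presentation of `M₂` on the direct sums of the terms of presentations of `M₁`
and `M₃`. The map `σ` lifts the augmentation of `M₃` along `p`, and `τ` is the off-diagonal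
component of the differential, chosen so that the composite to `M₂` vanishes. -/
abbrev Presentation.horseshoe {Λ : Type} [Ring Λ] {M₁ M₂ M₃ : Type}
    [AddCommGroup M₁] [Module Λ M₁] [AddCommGroup M₂] [Module Λ M₂] [AddCommGroup M₃] [Module Λ M₃]
    (ι : M₁ →ₗ[Λ] M₂) (p : M₂ →ₗ[Λ] M₃) (hι : Function.Injective ι)
    (hex : LinearMap.range ι = LinearMap.ker p)
    (pr₁ : Presentation Λ M₁) (pr₃ : Presentation Λ M₃)
    (σ : pr₃.P₀ →ₗ[Λ] M₂) (τ : pr₃.P₁ →ₗ[Λ] pr₁.P₀) (hσ : ∀ c, p (σ c) = pr₃.π c)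
    (hτ : ∀ c, ι (pr₁.π (τ c)) = -σ (pr₃.g c)) : Presentation Λ M₂ where
  P₁ := pr₁.P₁ × pr₃.P₁
  P₀ := pr₁.P₀ × pr₃.P₀
  g := LinearMap.prod (pr₁.g.coprod τ) (pr₃.g ∘ₗ LinearMap.snd Λ _ _)
  π := (ι ∘ₗ pr₁.π).coprod σ
  surj m := by
    obtain ⟨c, hc⟩ := pr₃.surj (p m)
    have h : m - σ c ∈ LinearMap.range ι := by
      rw [hex, LinearMap.mem_ker, map_sub, hσ, hc, sub_self]
    obtain ⟨x, hx⟩ := h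
    obtain ⟨a, rfl⟩ := pr₁.surj x
    exact ⟨(a, c), by simp [hx]⟩
  exact := by
    ext ⟨a, c⟩
    constructor
    · rintro ⟨⟨a₁, c₁⟩, h⟩
      obtain rfl : pr₁.g a₁ + τ c₁ = a := congrArg Prod.fst h
      obtain rfl : pr₃.g c₁ = c := congrArg Prod.snd h
      simp [hτ, pr₁.π_g]
    · intro h
      simp only [LinearMap.mem_ker, LinearMap.coprod_apply, LinearMap.comp_apply] at h
      have hpι : ∀ x, p (ι x) = 0 := fun x =>
        LinearMap.mem_ker.1 (hex ▸ LinearMap.mem_range_self ι x)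
      have hc : c ∈ LinearMap.ker pr₃.π := by
        have := congrArg p h
        simpa [hpι, hσ] using this
      rw [← pr₃.exact] at hc
      obtain ⟨c₁, rfl⟩ := hc
      have ha : a - τ c₁ ∈ LinearMap.ker pr₁.π := by
        rw [LinearMap.mem_ker]
        apply hι
        simp [hτ, h]
      rw [← pr₁.exact] at ha
      obtain ⟨a₁, ha⟩ := ha
      exact ⟨(a₁, c₁), by simp [ha]⟩

/-- Given a short exact sequence `0 → M₁ → M₂ → M₃ → 0`, for suitable choices of the
transposes there is an exact sequence
`0 → M₃* → M₂* → M₁* → Tr M₃ → Tr M₂ → Tr M₁ → 0`. -/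
theorem stmt_14 (Λ : Type) [Ring Λ] [IsNoetherianRing Λ] [IsNoetherianRing Λᵐᵒᵖ]
    (M₁ M₂ M₃ : Type) [AddCommGroup M₁] [Module Λ M₁] [Module.Finite Λ M₁]
    [AddCommGroup M₂] [Module Λ M₂] [Module.Finite Λ M₂]
    [AddCommGroup M₃] [Module Λ M₃] [Module.Finite Λ M₃]
    (ι : M₁ →ₗ[Λ] M₂) (p : M₂ →ₗ[Λ] M₃)
    (hι : Function.Injective ι) (hp : Function.Surjective p)
    (hex : LinearMap.range ι = LinearMap.ker p) :
    ∃ (pr₁ : Presentation Λ M₁) (pr₂ : Presentation Λ M₂) (pr₃ : Presentation Λ M₃)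
      (f₁ : (M₁ →ₗ[Λ] Λ) →ₗ[Λᵐᵒᵖ] pr₃.Tr) (f₂ : pr₃.Tr →ₗ[Λᵐᵒᵖ] pr₂.Tr)
      (f₃ : pr₂.Tr →ₗ[Λᵐᵒᵖ] pr₁.Tr),
      Function.Injective (dualMap p) ∧
      LinearMap.range (dualMap p) = LinearMap.ker (dualMap ι) ∧
      LinearMap.range (dualMap ι) = LinearMap.ker f₁ ∧
      LinearMap.range f₁ = LinearMap.ker f₂ ∧
      LinearMap.range f₂ = LinearMap.ker f₃ ∧
      Function.Surjective f₃ := by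
  obtain ⟨pr₁⟩ := exists_presentation (Λ := Λ) (M := M₁)
  obtain ⟨pr₃⟩ := exists_presentation (Λ := Λ) (M := M₃)
  have hpι : ∀ x, p (ι x) = 0 := fun x =>
    LinearMap.mem_ker.1 (hex ▸ LinearMap.mem_range_self ι x)
  obtain ⟨σ, hσ'⟩ := Module.projective_lifting_property p pr₃.π hp
  have hσ : ∀ c, p (σ c) = pr₃.π c := fun c => LinearMap.congr_fun hσ' c
  -- `τ` lifts `-σ g₃`, which takes values in `range ι`, along the surjection `π₁ : P₀ → M₁ ≃ range ι`.
  have hmem : ∀ c, (-(σ ∘ₗ pr₃.g)) c ∈ LinearMap.range ι := fun c => by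
    rw [hex, LinearMap.mem_ker]
    simp [hσ, pr₃.π_g]
  obtain ⟨τ, hτ'⟩ := Module.projective_lifting_property (ι.rangeRestrict ∘ₗ pr₁.π)
    ((-(σ ∘ₗ pr₃.g)).codRestrict (LinearMap.range ι) hmem)
    (ι.surjective_rangeRestrict.comp pr₁.surj)
  have hτ : ∀ c, ι (pr₁.π (τ c)) = -σ (pr₃.g c) := fun c =>
    congrArg Subtype.val (LinearMap.congr_fun hτ' c)
  let pr₂ := Presentation.horseshoe ι p hι hex pr₁ pr₃ σ τ hσ hτ
  have hg₂ : ∀ a c, pr₂.g (a, c) = (pr₁.g a + τ c, pr₃.g c) := fun _ _ => rfl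
  have hπ₂ : ∀ a c, pr₂.π (a, c) = ι (pr₁.π a) + σ c := fun _ _ => rfl
  let snd₁ : pr₂.P₁ →ₗ[Λ] pr₃.P₁ := LinearMap.snd Λ pr₁.P₁ pr₃.P₁
  let inl₁ : pr₁.P₁ →ₗ[Λ] pr₂.P₁ := LinearMap.inl Λ pr₁.P₁ pr₃.P₁
  let fst₀ : pr₂.P₀ →ₗ[Λ] pr₁.P₀ := LinearMap.fst Λ pr₁.P₀ pr₃.P₀
  let snd₀ : pr₂.P₀ →ₗ[Λ] pr₃.P₀ := LinearMap.snd Λ pr₁.P₀ pr₃.P₀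
  let inl₀ : pr₁.P₀ →ₗ[Λ] pr₂.P₀ := LinearMap.inl Λ pr₁.P₀ pr₃.P₀
  let inr₀ : pr₃.P₀ →ₗ[Λ] pr₂.P₀ := LinearMap.inr Λ pr₁.P₀ pr₃.P₀
  have h₂ : LinearMap.range (dualMap pr₃.g) ≤
      (LinearMap.range (dualMap pr₂.g)).comap (dualMap snd₁) := by
    rintro _ ⟨v, rfl⟩
    exact ⟨v ∘ₗ snd₀, rfl⟩
  have h₃ : LinearMap.range (dualMap pr₂.g) ≤
      (LinearMap.range (dualMap pr₁.g)).comap (dualMap inl₁) := by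
    rintro _ ⟨w, rfl⟩
    refine ⟨w ∘ₗ inl₀, LinearMap.ext fun a => ?_⟩
    change w (pr₁.g a, 0) = w (pr₂.g (a, 0))
    rw [hg₂]; simp
  refine ⟨pr₁, pr₂, pr₃,
    (LinearMap.range (dualMap pr₃.g)).mkQ ∘ₗ dualMap (pr₁.π ∘ₗ τ),
    Submodule.mapQ _ _ (dualMap snd₁) h₂, Submodule.mapQ _ _ (dualMap inl₁) h₃,
    ?_, ?_, ?_, ?_, ?_, ?_⟩
  · intro f f' h
    ext m
    obtain ⟨x, rfl⟩ := hp m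
    exact LinearMap.congr_fun h x
  · ext f
    constructor
    · rintro ⟨h, rfl⟩
      refine LinearMap.mem_ker.2 (LinearMap.ext fun x => ?_)
      change h (p (ι x)) = 0
      rw [hpι, map_zero]
    · intro hf
      have hf' : ∀ x, f (ι x) = 0 := fun x => LinearMap.congr_fun (LinearMap.mem_ker.1 hf) x
      -- `f σ` vanishes on the relations of `M₃`, so it descends to a functional on `M₃`.
      obtain ⟨h, hh⟩ := pr₃.exists_factor (f ∘ₗ σ) fun c => by
        have := hf' (pr₁.π (τ c))
        rwa [hτ, map_neg, neg_eq_zero] at this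
      refine ⟨h, LinearMap.ext fun m => ?_⟩
      obtain ⟨⟨a, c⟩, rfl⟩ := pr₂.surj m
      change h (p (pr₂.π (a, c))) = f (pr₂.π (a, c))
      rw [hπ₂, map_add, map_add, map_add, hpι, map_zero, zero_add, hσ, hh, hf', zero_add]
      rfl
  · ext f
    rw [LinearMap.mem_ker, LinearMap.comp_apply, Submodule.mkQ_apply,
      Submodule.Quotient.mk_eq_zero]
    constructor
    · rintro ⟨h, rfl⟩
      refine ⟨-(h ∘ₗ σ), LinearMap.ext fun c => ?_⟩
      change -h (σ (pr₃.g c)) = h (ι (pr₁.π (τ c)))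
      rw [hτ, map_neg]
    · rintro ⟨v, hv⟩
      have hv' : ∀ c, v (pr₃.g c) = f (pr₁.π (τ c)) := fun c => LinearMap.congr_fun hv c
      -- `(a, c) ↦ f (π₁ a) - v c` vanishes on the relations of `M₂` and extends `f`.
      obtain ⟨h, hh⟩ := pr₂.exists_factor (f ∘ₗ pr₁.π ∘ₗ fst₀ - v ∘ₗ snd₀) fun x => by
        obtain ⟨a, c⟩ := x
        change f (pr₁.π (pr₁.g a + τ c)) - v (pr₃.g c) = 0
        rw [hv', map_add, pr₁.π_g, zero_add, sub_self]
      refine ⟨h, LinearMap.ext fun x => ?_⟩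
      obtain ⟨a, rfl⟩ := pr₁.surj x
      have ha : h (pr₂.π (a, 0)) = f (pr₁.π a) - v 0 := hh (a, 0)
      rw [hπ₂, map_zero, map_zero, add_zero, sub_zero] at ha
      exact ha
  · ext y
    obtain ⟨w, rfl⟩ := Submodule.mkQ_surjective _ y
    rw [LinearMap.mem_ker, Submodule.mkQ_apply, Submodule.mapQ_apply,
      Submodule.Quotient.mk_eq_zero]
    constructor
    · rintro ⟨f, hf⟩
      rw [LinearMap.comp_apply, Submodule.mkQ_apply, Submodule.Quotient.eq] at hf
      obtain ⟨v, hv⟩ := hf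
      have hv' : ∀ c, v (pr₃.g c) = f (pr₁.π (τ c)) - w c := fun c => LinearMap.congr_fun hv c
      refine ⟨f ∘ₗ pr₁.π ∘ₗ fst₀ - v ∘ₗ snd₀, LinearMap.ext ?_⟩
      rintro ⟨a, c⟩
      change f (pr₁.π (pr₁.g a + τ c)) - v (pr₃.g c) = w c
      rw [hv', map_add, pr₁.π_g, zero_add, sub_sub_cancel]
    · rintro ⟨h, hh⟩
      have hh' : ∀ a c, h (pr₁.g a + τ c, pr₃.g c) = w c := fun a c =>
        LinearMap.congr_fun hh (a, c)
      -- The first component of `h` kills the relations of `M₁`, hence comes from `M₁*`.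
      obtain ⟨f, hf⟩ := pr₁.exists_factor (h ∘ₗ inl₀) fun a => by
        have := hh' a 0
        rw [map_zero, map_zero, map_zero, add_zero] at this
        exact this
      refine ⟨f, ?_⟩
      rw [LinearMap.comp_apply, Submodule.mkQ_apply, Submodule.Quotient.eq]
      refine ⟨-(h ∘ₗ inr₀), LinearMap.ext fun c => ?_⟩
      change -h (0, pr₃.g c) = f (pr₁.π (τ c)) - w c
      rw [hf, ← hh' 0 c]
      have hs : h (pr₁.g 0 + τ c, pr₃.g c) = h (τ c, 0) + h (0, pr₃.g c) := by
        rw [map_zero, zero_add]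
        exact map_prod_split h _ _
      change -h (0, pr₃.g c) = h (τ c, 0) - _
      rw [hs, sub_add_cancel_left]
  · ext y
    obtain ⟨w, rfl⟩ := Submodule.mkQ_surjective _ y
    rw [LinearMap.mem_ker, Submodule.mkQ_apply, Submodule.mapQ_apply,
      Submodule.Quotient.mk_eq_zero]
    constructor
    · rintro ⟨z, hz⟩
      obtain ⟨v, rfl⟩ := Submodule.mkQ_surjective _ z
      rw [Submodule.mkQ_apply, Submodule.mapQ_apply, Submodule.Quotient.eq] at hz
      -- `v ∘ snd` restricts to zero along `inl`, so `w` restricts to a coboundary.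
      obtain ⟨u, hu⟩ := h₃ hz
      refine ⟨-u, LinearMap.ext fun a => ?_⟩
      have hu' : u (pr₁.g a) = v 0 - w (a, 0) := LinearMap.congr_fun hu a
      change -u (pr₁.g a) = w (a, 0)
      rw [hu', map_zero, zero_sub, neg_neg]
    · rintro ⟨u, hu⟩
      have hu' : ∀ a, u (pr₁.g a) = w (a, 0) := fun a => LinearMap.congr_fun hu a
      -- Subtracting the coboundary of `u ∘ fst` leaves a functional of the second component only.
      refine ⟨Submodule.Quotient.mk
        (w ∘ₗ LinearMap.inr Λ pr₁.P₁ pr₃.P₁ - u ∘ₗ τ), ?_⟩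
      rw [Submodule.mapQ_apply, Submodule.Quotient.eq]
      refine ⟨-(u ∘ₗ fst₀), LinearMap.ext ?_⟩
      rintro ⟨a, c⟩
      change -u (pr₁.g a + τ c) = w (0, c) - u (τ c) - w (a, c)
      have hw : w (a, c) = w (a, 0) + w (0, c)  := map_prod_split w a c
      rw [hw, map_add, hu']
      abel
  · intro y
    obtain ⟨u, rfl⟩ := Submodule.mkQ_surjective _ y
    refine ⟨Submodule.Quotient.mk (u ∘ₗ LinearMap.fst Λ pr₁.P₁ pr₃.P₁), ?_⟩
    rw [Submodule.mapQ_apply]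
    rfl
end
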